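/- arXiv:2303.04367 — 2 statements merged into one kernel-verified Lean document; each statement's English description precedes it below -/
import Mathlib

section
/- Let ⟨A,B⟩ be a commuting parabolic linear ℤ²-action on T^d. Suppose there exists a resonant vector m with resonance pair (k,l) such that e(m, α_{k,l}) = 1 for every (α,β) ∈ T(A,B), where α_{k,l} = a^kb^l − A^kB^l is the translation part of the element (k,l) of the affine action generated by a = A+α, b = B+β. Then for every (α,β) ∈ T(A,B) the affine action ⟨a,b⟩ has a rank-one factor that is genuinely parabolic; in particular ⟨A,B⟩ is locked. -/
/-!
The lifts `a`, `b` of the generators to `ℝ^d` commute, so `g = a ^ k b ^ l` is defined and its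
translation part `α_{k,l}` is `g 0`. Scaling `(α, β)` scales `α_{k,l}`, and `e(m, t α_{k,l}) = 1` for
all real `t` forces `⟨m, α_{k,l}⟩ = 0` in `ℝ` (`pairing_eq_zero_of_eF`).

The linear relation `k Â m + l B̂ m = 0` and the existence of some nontrivial relation
`Ā ^ k' B̄ ^ l' m = m` together give `Ā ^ k B̄ ^ l m = m` (`resonance_fixes`). Hence
`⟨m, g x⟩ = ⟨m, x⟩` for all `x ∈ ℝ^d`.

Let `L` be the lattice of all frequencies with this last property. It contains `m`, it is invariant
under `Aᵀ` and `Bᵀ` because `g` commutes with `a` and `b`, and it is saturated because the condition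
is an equality of real numbers rather than one modulo `ℤ`. So `L` is a direct summand of `ℤ^d`
(`exists_matrix_of_saturated`) and defines a quotient torus carrying a factor action on which
`a ^ k b ^ l` is the identity. As `k` and `l` are coprime, the factor action is cyclic
(`exists_zpow_generator`). Its linear parts are unipotent, and not both trivial since `m ∈ L` is
moved by `Ā` or `B̄` (`exists_genuinelyParabolic_factor`).
-/
open MeasureTheory

namespace ParabolicKAM

/-- Points of `ℝ^d` (lifts of points of the torus `𝕋^d`). -/
abbrev Vec (d : ℕ) := Fin d → ℝ

/-- Integer vectors (Fourier frequencies). -/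
abbrev IVec (d : ℕ) := Fin d → ℤ

/-- Square integer matrices. -/
abbrev Mat (d : ℕ) := Matrix (Fin d) (Fin d) ℤ

/-- The `d`-dimensional torus. -/
abbrev Td (d : ℕ) := Fin d → AddCircle (1 : ℝ)

instance : Fact ((0 : ℝ) < 1) := ⟨one_pos⟩

/-- The real matrix with the same entries as an integer matrix. -/
def rmat {d₁ d₂ : ℕ} (A : Matrix (Fin d₁) (Fin d₂) ℤ) : Matrix (Fin d₁) (Fin d₂) ℝ :=
  A.map fun a => (a : ℝ)

/-- The affine map `x ↦ A x + α` on `ℝ^d` (a lift of the affine torus map). -/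
def affR {d : ℕ} (A : Mat d) (α : Vec d) : Vec d → Vec d :=
  fun x => (rmat A).mulVec x + α

/-- `A` is parabolic (unipotent). -/
def IsParabolic {d : ℕ} (A : Mat d) : Prop := ∃ S : ℕ, (A - 1) ^ S = 0

/-- `A` is parabolic of step exactly `S`. -/
def IsStepParabolic {d : ℕ} (A : Mat d) (S : ℕ) : Prop :=
  (A - 1) ^ S = 0 ∧ (A - 1) ^ (S - 1) ≠ 0

/-- `A` is step-2 parabolic. -/
def IsStep2 {d : ℕ} (A : Mat d) : Prop := (A - 1) ^ 2 = 0 ∧ A ≠ 1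

/-- `(α, β)` is an admissible pair of translation parts: `(A - Id) β = (B - Id) α`. -/
def TAB {d : ℕ} (A B : Mat d) (α β : Vec d) : Prop :=
  (rmat (A - 1)).mulVec β = (rmat (B - 1)).mulVec α

/-- The dual matrix `Ā = (Aᵀ)⁻¹` (acting on frequencies). -/
noncomputable def dual {d : ℕ} (A : Mat d) : Mat d := A.transpose⁻¹

/-- `Â = Ā - Id`. -/
noncomputable def hat {d : ℕ} (A : Mat d) : Mat d := dual A - 1

/-- Integer powers of a matrix. -/
noncomputable def zpowM {d : ℕ} (A : Mat d) : ℤ → Mat d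
  | Int.ofNat n => A ^ n
  | Int.negSucc n => (A ^ (n + 1))⁻¹

/-- Euclidean norm of an integer vector. -/
noncomputable def inorm {d : ℕ} (m : IVec d) : ℝ :=
  Real.sqrt (∑ i, ((m i : ℝ)) ^ 2)

/-- Euclidean norm of a real vector. -/
noncomputable def rnorm {d : ℕ} (v : Vec d) : ℝ :=
  Real.sqrt (∑ i, (v i) ^ 2)

/-- Standard inner product of integer vectors. -/
def iprod {d : ℕ} (m n : IVec d) : ℤ := ∑ i, m i * n i

/-- Euclidean operator norm of (the real matrix of) an integer matrix. -/
noncomputable def eopNorm {d : ℕ} (M : Mat d) : ℝ :=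
  ‖LinearMap.toContinuousLinearMap (Matrix.toEuclideanLin (rmat M))‖

/-- `m` is a resonant vector for the dual action of `⟨A, B⟩`. -/
def Resonant {d : ℕ} (A B : Mat d) (m : IVec d) : Prop :=
  m ≠ 0 ∧
    (∃ k l : ℤ, ¬(k = 0 ∧ l = 0) ∧ (zpowM (dual A) k * zpowM (dual B) l).mulVec m = m) ∧
    ((dual A).mulVec m ≠ m ∨ (dual B).mulVec m ≠ m)

/-- The normalization `k ∧ l = 1` for resonance pairs. -/
def NormalizedPair (k l : ℤ) : Prop :=
  (k = 1 ∧ l = 0) ∨ (k = 0 ∧ l = 1) ∨ (Int.gcd k l = 1 ∧ 0 < k)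

/-- `(k, l)` is the resonance pair associated to the resonant vector `m`. -/
def IsResPair {d : ℕ} (A B : Mat d) (m : IVec d) (k l : ℤ) : Prop :=
  NormalizedPair k l ∧ k • (hat A).mulVec m + l • (hat B).mulVec m = 0

/-- `m ∈ 𝒞₁`: degenerate frequencies, fixed by the whole dual action. -/
def InC1 {d : ℕ} (A B : Mat d) (m : IVec d) : Prop :=
  m ≠ 0 ∧ (dual A).mulVec m = m ∧ (dual B).mulVec m = m

/-- `m ∈ 𝒞₃`: nonzero, non-degenerate, non-resonant frequencies. -/
def InC3 {d : ℕ} (A B : Mat d) (m : IVec d) : Prop :=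
  m ≠ 0 ∧ ¬InC1 A B m ∧ ¬Resonant A B m

/-- `s` is the step of the frequency `m`: the least `s` with `B̂^s m = 0`. -/
def stepOf {d : ℕ} (B : Mat d) (m : IVec d) (s : ℕ) : Prop :=
  ((hat B) ^ s).mulVec m = 0 ∧ ∀ t : ℕ, ((hat B) ^ t).mulVec m = 0 → s ≤ t

/-- `m` is a lowest point on its `Ā`-orbit (for step-2 `A`, `Ā^k m = m + k Â m`). -/
def LowestOnOrbit {d : ℕ} (A : Mat d) (m : IVec d) : Prop :=
  ∀ k : ℤ, inorm m ≤ inorm (m + k • (hat A).mulVec m)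

/-- The affine map of the torus with integer linear part `M` and translation `γ`. -/
noncomputable def affT {n : ℕ} (M : Mat n) (γ : Td n) : Td n → Td n :=
  fun x i => (∑ j, M i j • x j) + γ i

/-- The projection of tori induced by an integer matrix `P`. -/
noncomputable def projT {n d : ℕ} (P : Matrix (Fin n) (Fin d) ℤ) : Td d → Td n :=
  fun x i => ∑ j, P i j • x j

/-- The point of the torus below `α ∈ ℝ^d`. -/
noncomputable def toT {d : ℕ} (α : Vec d) : Td d := fun i => (α i : AddCircle (1 : ℝ))

/-- A self-map of the torus is affine if it has the form `x ↦ M x + γ`, `M` integer. -/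
def IsAffT {n : ℕ} (f : Td n → Td n) : Prop := ∃ (M : Mat n) (γ : Td n), f = affT M γ

/-- A rank-one factor of the affine `ℤ²`-action generated by `A + α` and `B + β`: a factor
action on a quotient torus, induced by a surjective integer-linear projection intertwining
the action, whose image is contained in the group generated by a single affine map. -/
structure RankOneFactorData (d : ℕ) (A B : Mat d) (α β : Vec d) : Type where
  n : ℕ
  npos : 0 < n
  P : Matrix (Fin n) (Fin d) ℤ
  surj : Function.Surjective fun m : Fin d → ℤ => P.mulVec m
  A' : Mat n
  B' : Mat n
  α' : Td n
  β' : Td n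
  intertwineA : projT P ∘ affT A (toT α) = affT A' α' ∘ projT P
  intertwineB : projT P ∘ affT B (toT β) = affT B' β' ∘ projT P
  rankOne : ∃ c : Equiv.Perm (Td n), IsAffT (⇑c) ∧
      (∃ u : Equiv.Perm (Td n), u ∈ Subgroup.zpowers c ∧ ⇑u = affT A' α') ∧
      (∃ v : Equiv.Perm (Td n), v ∈ Subgroup.zpowers c ∧ ⇑v = affT B' β')

/-- The rank-one factor is the identity: both generators project to the identity. -/
def RankOneFactorData.IsIdentity {d : ℕ} {A B : Mat d} {α β : Vec d}
    (F : RankOneFactorData d A B α β) : Prop :=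
  affT F.A' F.α' = id ∧ affT F.B' F.β' = id

/-- The rank-one factor is genuinely parabolic: some generator projects to an affine map
with non-identity unipotent linear part. -/
def RankOneFactorData.IsGenuinelyParabolic {d : ℕ} {A B : Mat d} {α β : Vec d}
    (F : RankOneFactorData d A B α β) : Prop :=
  (IsParabolic F.A' ∧ F.A' ≠ 1) ∨ (IsParabolic F.B' ∧ F.B' ≠ 1)

/-- The linear action `⟨A, B⟩` is locked: every admissible affine action above it has a
rank-one factor that is the identity or genuinely parabolic. -/
def IsLocked {d : ℕ} (A B : Mat d) : Prop :=
  ∀ α β : Vec d, TAB A B α β →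
    ∃ F : RankOneFactorData d A B α β, F.IsIdentity ∨ F.IsGenuinelyParabolic

/-- `f : ℝ^d → ℝ^d` is `ℤ^d`-periodic. -/
def ZPeriodic {d : ℕ} (f : Vec d → Vec d) : Prop :=
  ∀ (x : Vec d) (v : IVec d), f (x + fun i => (v i : ℝ)) = f x

/-- The `C^r` norm of a map `ℝ^d → ℝ^d`. -/
noncomputable def crNorm {d : ℕ} (r : ℕ) (f : Vec d → Vec d) : ℝ :=
  ⨆ i : Fin (r + 1), ⨆ x : Vec d, ‖iteratedFDeriv ℝ (i : ℕ) f x‖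

/-- `f` has zero average over the fundamental domain. -/
def ZeroAvg {d : ℕ} (f : Vec d → Vec d) : Prop :=
  ∫ x in Set.Icc (0 : Vec d) 1, f x = 0

/-- KAM-rigidity, under volume preserving perturbations, of the affine `ℤ²`-action
generated by `a = A + α` and `b = B + β` (expressed on `ℤ^d`-periodic lifts to `ℝ^d`). -/
def KAMRigid {d : ℕ} (A B : Mat d) (α β : Vec d) : Prop :=
  ∃ σ r₀ : ℕ, σ ≤ r₀ ∧ ∃ ε : ℝ, 0 < ε ∧ ∃ C : ℝ, 0 < C ∧
    ∀ r : ℕ, r₀ ≤ r → ∀ f g : Vec d → Vec d,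
      ContDiff ℝ (⊤ : ℕ∞) f → ContDiff ℝ (⊤ : ℕ∞) g → ZPeriodic f → ZPeriodic g →
      (fun x => affR A α x + f x) ∘ (fun x => affR B β x + g x) =
        (fun x => affR B β x + g x) ∘ (fun x => affR A α x + f x) →
      MeasurePreserving (fun x => affR A α x + f x) volume volume →
      MeasurePreserving (fun x => affR B β x + g x) volume volume →
      crNorm r f ≤ ε → crNorm r g ≤ ε → ZeroAvg f → ZeroAvg g →
      ∃ h : Vec d → Vec d, ContDiff ℝ (⊤ : ℕ∞) h ∧ ZPeriodic h ∧
        crNorm (r - σ) h ≤ C * ε ∧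
        Function.Bijective (fun x : Vec d => x + h x) ∧
        MeasurePreserving (fun x : Vec d => x + h x) volume volume ∧
        (fun x : Vec d => x + h x) ∘ (fun x => affR A α x + f x) =
          affR A α ∘ (fun x : Vec d => x + h x) ∧
        (fun x : Vec d => x + h x) ∘ (fun x => affR B β x + g x) =
          affR B β ∘ (fun x : Vec d => x + h x)

/-- Ergodicity of the affine `ℤ²`-action with respect to Haar measure on the torus. -/
def JointlyErgodic {d : ℕ} (A B : Mat d) (α β : Vec d) : Prop :=
  ∀ s : Set (Td d), MeasurableSet s →
    affT A (toT α) ⁻¹' s = s → affT B (toT β) ⁻¹' s = s →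
    volume s = 0 ∨ volume sᶜ = 0

/-- The linear map whose kernel is the space `𝒯(A,B)` of admissible translation parts. -/
noncomputable def TABmap {d : ℕ} (A B : Mat d) : (Vec d × Vec d) →ₗ[ℝ] Vec d :=
  ((rmat (A - 1)).mulVecLin.comp (LinearMap.snd ℝ (Vec d) (Vec d))) -
    ((rmat (B - 1)).mulVecLin.comp (LinearMap.fst ℝ (Vec d) (Vec d)))

/-- The space `𝒯(A,B)` of admissible translation parts, as a subspace of `ℝ^d × ℝ^d`. -/
noncomputable def TABsub {d : ℕ} (A B : Mat d) : Submodule ℝ (Vec d × Vec d) :=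
  LinearMap.ker (TABmap A B)

/-- `e(m, x) = e^{2π i ⟨m, x⟩}`. -/
noncomputable def eF {d : ℕ} (m : IVec d) (x : Vec d) : ℂ :=
  Complex.exp (2 * (Real.pi : ℂ) * Complex.I * ∑ i, (m i : ℂ) * (x i : ℂ))

/-- `c : ℤ → ℤ → ℝ^d` is the family of translation parts `α_{k,l} = a^k b^l - A^k B^l`
of the elements of the affine action generated by `a = A + α` and `b = B + β`. -/
def IsTransFamily {d : ℕ} (A B : Mat d) (α β : Vec d) (c : ℤ → ℤ → Vec d) : Prop :=
  c 0 0 = 0 ∧ (∀ k l : ℤ, c (k + 1) l = α + (rmat A).mulVec (c k l)) ∧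
    ∀ k l : ℤ, c k (l + 1) = β + (rmat B).mulVec (c k l)

/-- The maximal translation factor of the action is `(γ,τ)`-simultaneously Diophantine. -/
def DiophTransFactor {d : ℕ} (γ τ : ℝ) (A B : Mat d) (α β : Vec d) : Prop :=
  ∀ m : IVec d, m ≠ 0 → (dual A).mulVec m = m → (dual B).mulVec m = m →
    γ / inorm m ^ τ < max ‖1 - eF m α‖ ‖1 - eF m β‖

/-- Every resonance of the action is `(γ,τ)`-Diophantine. -/
def DiophResonances {d : ℕ} (γ τ : ℝ) (A B : Mat d) (α β : Vec d) : Prop :=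
  ∀ (m : IVec d) (k l : ℤ), Resonant A B m → IsResPair A B m k l →
    ∀ c : ℤ → ℤ → Vec d, IsTransFamily A B α β c →
      γ / inorm m ^ τ < ‖1 - eF m (c k l)‖

/-- The affine action generated by `A + α`, `B + β` is `(γ,τ)`-Diophantine. -/
def DiophAction {d : ℕ} (γ τ : ℝ) (A B : Mat d) (α β : Vec d) : Prop :=
  DiophTransFactor γ τ A B α β ∧ DiophResonances γ τ A B α β

/-- The linearized coboundary operator `D h = h ∘ a - A h` above `a = A + α`. -/
def Dop {d : ℕ} (A : Mat d) (α : Vec d) (h : Vec d → Vec d) : Vec d → Vec d :=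
  fun x => h (affR A α x) - (rmat A).mulVec (h x)

/-- Generalized binomial coefficient `C(l, j) = l (l-1) ⋯ (l-j+1) / j!`
(a polynomial in `l` of degree `j`; the division is exact). -/
def zchoose (l : ℤ) (j : ℕ) : ℤ :=
  (∏ i ∈ Finset.range j, (l - (i : ℤ))) / (j.factorial : ℤ)



/-! ### Commuting unipotent operators and resonances -/

section UnipotentAlgebra
variable {R M : Type*} [Ring R] [AddCommGroup M] [Module R M]

/-- A nilpotent `z` that does not kill `m` has a vector `z ^ r • m` on which it acts as a
nonzero square-zero operator. -/
lemma exists_top_of_isNilpotent {z : R} (hz : IsNilpotent z) {m : M} (hm : z • m ≠ 0) :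
    ∃ r : ℕ, z • (z ^ r • m) ≠ 0 ∧ z • (z • (z ^ r • m)) = 0 := by
  classical
  obtain ⟨S, hS⟩ := hz
  have hex : ∃ j : ℕ, z ^ (j + 1) • m = 0 := ⟨S, by rw [pow_succ', hS]; simp⟩
  have h0 : Nat.find hex ≠ 0 := fun h => hm (by simpa [h] using Nat.find_spec hex)
  obtain ⟨r, hr⟩ := Nat.exists_eq_succ_of_ne_zero h0
  refine ⟨r, ?_, ?_⟩
  · rw [smul_smul, ← pow_succ']
    exact Nat.find_min hex (by lia)
  · rw [smul_smul z (z ^ r), ← pow_succ', smul_smul, ← pow_succ', ← Nat.succ_eq_add_one r, ← hr]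
    exact Nat.find_spec hex

/-- Integer powers of a step-2 shear: `w ↦ w + u`, `u ↦ u` iterates to `w ↦ w + j u`. -/
lemma zpow_smul_eq_add {U : Rˣ} {w u : M} (hw : U • w = w + u) (hu : U • u = u) (j : ℤ) :
    U ^ j • w = w + j • u := by
  have hfix (i : ℤ) : U ^ i • u = u := MulAction.mem_stabilizer_iff.1
    (zpow_mem (MulAction.mem_stabilizer_iff.2 hu) i)
  induction j with
  | zero => simp
  | succ i ih =>
    rw [zpow_add_one, mul_smul, hw, smul_add, ih, hfix, add_smul, one_smul, add_assoc]
  | pred i ih =>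
    have h1 : U⁻¹ • w = w - u := by rw [inv_smul_eq_iff, smul_sub, hw, hu]; abel
    rw [zpow_sub_one, mul_smul, h1, smul_sub, ih, hfix, sub_smul, one_smul]
    abel

lemma isNilpotent_zpow_sub_one {U : Rˣ} (hU : IsNilpotent ((U : R) - 1)) (j : ℤ) :
    IsNilpotent (((U ^ j : Rˣ) : R) - 1) := by
  have hnat : ∀ i : ℕ, IsNilpotent (((U ^ i : Rˣ) : R) - 1) := fun i => by
    rw [Units.val_pow_eq_pow_val, ← geom_sum_mul]
    refine Commute.isNilpotent_mul_left ?_ hU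
    refine Commute.sum_left _ _ _ fun j _ => ?_
    exact ((Commute.refl _).sub_right (Commute.one_right _)).pow_left _
  obtain ⟨i, rfl | rfl⟩ := j.eq_nat_or_neg
  · simpa using hnat i
  · have h : ((U ^ (-(i : ℤ)) : Rˣ) : R) - 1
        = -(((U ^ i)⁻¹ : Rˣ) : R) * (((U ^ i : Rˣ) : R) - 1) := by
      rw [neg_mul, mul_sub, Units.inv_mul]
      simp
    rw [h]
    refine Commute.isNilpotent_mul_left ?_ (hnat i)
    refine Commute.neg_left (Commute.sub_right ?_ (Commute.one_right _))
    exact (Commute.refl _).units_inv_left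

lemma isNilpotent_mul_sub_one {U V : R} (hc : Commute U V) (hU : IsNilpotent (U - 1))
    (hV : IsNilpotent (V - 1)) : IsNilpotent (U * V - 1) := by
  have h : U * V - 1 = (U - 1) * V + (V - 1) := by noncomm_ring
  rw [h]
  have h1 : Commute (U - 1) V := hc.sub_left (Commute.one_left _)
  have h2 : Commute (U - 1) (V - 1) := h1.sub_right (Commute.one_right _)
  refine Commute.isNilpotent_add ?_ (h1.isNilpotent_mul_right hU) hV
  exact h2.mul_left ((Commute.refl V).sub_right (Commute.one_right _))

/-- A unipotent operator on a torsion-free group has no periodic points other than its fixed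
points. -/
lemma smul_eq_of_zpow_smul_eq [IsAddTorsionFree M] {W : Rˣ} (hW : IsNilpotent ((W : R) - 1))
    {m : M} {q : ℤ} (hq : q ≠ 0) (h : W ^ q • m = m) : W • m = m := by
  by_contra hne
  have hne' : ((W : R) - 1) • m ≠ 0 := by
    rw [sub_smul, one_smul, sub_ne_zero]; exact hne
  obtain ⟨r, h1, h2⟩ := exists_top_of_isNilpotent hW hne'
  set n : R := (W : R) - 1 with hn
  set w := n ^ r • m with hw
  have hs : ∀ v : M, W • v = v + n • v := fun v => by
    rw [hn, sub_smul, one_smul, Units.smul_def]; abel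
  have h3 := zpow_smul_eq_add (hs w) (by rw [hs, h2, add_zero]) q
  have hcm : Commute ((W ^ q : Rˣ) : R) (n ^ r) :=
    (((Commute.refl (W : R)).sub_right (Commute.one_right _)).pow_right r).units_zpow_left q
  have h4 : W ^ q • w = w := by
    rw [hw, Units.smul_def, smul_smul, hcm.eq, mul_smul, ← Units.smul_def, h]
  rw [h4, left_eq_add, smul_eq_zero] at h3
  exact h3.elim hq h1

/-- For commuting unipotents `U`, `V` on a torsion-free group, a linear relation
`k (U - 1) m + l (V - 1) m = 0` with `k`, `l` coprime, together with *some* relation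
`U ^ k' V ^ l' m = m`, upgrades to `U ^ k V ^ l m = m`. The linear relation alone does not suffice
in general when `(U - 1) ^ 2` or `(V - 1) ^ 2` does not kill `m`. With `a k + b l = 1` and `z = -b (U - 1) + a (V - 1)`, one
has `U m = m - l z m` and `V m = m + k z m`. Comparing first-order terms on the top `z`-chain of
`m` shows that `(k', l')` is a multiple of `(k, l)`, so `m` is periodic, hence fixed, under the
unipotent `U ^ k V ^ l`. -/
lemma resonance_fixes [IsAddTorsionFree M] {U V : Rˣ} (hc : Commute U V)
    (hU : IsNilpotent ((U : R) - 1)) (hV : IsNilpotent ((V : R) - 1)) {m : M} {k l k' l' : ℤ}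
    (hkl : IsCoprime k l)
    (hpair : k • ((U : R) - 1) • m + l • ((V : R) - 1) • m = 0)
    (hne : ¬(k' = 0 ∧ l' = 0)) (hfix : (U ^ k' * V ^ l') • m = m)
    (hmov : U • m ≠ m ∨ V • m ≠ m) : (U ^ k * V ^ l) • m = m := by
  obtain ⟨a, b, hab⟩ := hkl
  set x : R := (U : R) - 1 with hx
  set y : R := (V : R) - 1 with hy
  have hcR : Commute (U : R) (V : R) := by
    rw [commute_iff_eq, ← Units.val_mul, ← Units.val_mul, hc.eq]
  have hUy : Commute (U : R) y := hcR.sub_right (Commute.one_right _)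
  have hUx : Commute (U : R) x := (Commute.refl _).sub_right (Commute.one_right _)
  have hVx : Commute (V : R) x := hcR.symm.sub_right (Commute.one_right _)
  have hVy : Commute (V : R) y := (Commute.refl _).sub_right (Commute.one_right _)
  have hxy : Commute x y := hUy.sub_left (Commute.one_left _)
  set z : R := (-b) • x + a • y with hz
  have hUz : Commute (U : R) z := (hUx.smul_right _).add_right (hUy.smul_right _)
  have hVz : Commute (V : R) z := (hVx.smul_right _).add_right (hVy.smul_right _)
  have hxz : Commute x z := hUz.sub_left (Commute.one_left _)
  have hyz : Commute y z := hVz.sub_left (Commute.one_left _)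
  have hznil : IsNilpotent z :=
    Commute.isNilpotent_add ((hxy.smul_left _).smul_right _) (hU.smul _) (hV.smul _)
  have hzm : z • m = (-b) • x • m + a • y • m := by rw [hz, add_smul, smul_assoc, smul_assoc]
  have hxm : x • m = (-l) • z • m := by
    have h1 : (a * k + b * l) • x • m = x • m := by rw [hab, one_smul]
    rw [hzm]
    generalize x • m = X at *
    generalize y • m = Y at *
    linear_combination (norm := module) a • hpair - h1
  have hym : y • m = k • z • m := by
    have h1 : (a * k + b * l) • y • m = y • m := by rw [hab, one_smul]
    rw [hzm]
    generalize x • m = X at *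
    generalize y • m = Y at *
    linear_combination (norm := module) b • hpair - h1
  have hzm0 : z • m ≠ 0 := by
    intro h0
    rw [h0, smul_zero, hx, sub_smul, one_smul, sub_eq_zero] at hxm
    rw [h0, smul_zero, hy, sub_smul, one_smul, sub_eq_zero] at hym
    exact hmov.elim (fun h => h hxm) (fun h => h hym)
  obtain ⟨r, h1, h2⟩ := exists_top_of_isNilpotent hznil hzm0
  set w := z ^ r • m with hw
  have hUw : U • w = w + (-l) • z • w := by
    have : x • w = (-l) • z • w := by
      rw [hw, smul_smul, (hxz.pow_right r).eq, mul_smul, hxm, smul_comm (z ^ r) (-l), smul_smul,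
        smul_smul, (Commute.pow_self z r).eq]
    rw [← this, hx, sub_smul, one_smul, Units.smul_def]; abel
  have hVw : V • w = w + k • z • w := by
    have : y • w = k • z • w := by
      rw [hw, smul_smul, (hyz.pow_right r).eq, mul_smul, hym, smul_comm (z ^ r) k, smul_smul,
        smul_smul, (Commute.pow_self z r).eq]
    rw [← this, hy, sub_smul, one_smul, Units.smul_def]; abel
  have hUu : U • z • w = z • w := by
    rw [Units.smul_def, smul_smul, hUz.eq, mul_smul, ← Units.smul_def, hUw, smul_add,
      smul_comm z (-l), h2, smul_zero, add_zero]
  have hVu : V • z • w = z • w := by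
    rw [Units.smul_def, smul_smul, hVz.eq, mul_smul, ← Units.smul_def, hVw, smul_add,
      smul_comm z k, h2, smul_zero, add_zero]
  have hUl := zpow_smul_eq_add hUw (by rw [smul_comm, hUu]) k'
  have hVl := zpow_smul_eq_add hVw (by rw [smul_comm, hVu]) l'
  have hUu' : U ^ k' • z • w = z • w := MulAction.mem_stabilizer_iff.1
      (zpow_mem (MulAction.mem_stabilizer_iff.2 hUu) _)
  have hfw : (U ^ k' * V ^ l') • w = w := by
    have hcm : Commute ((U ^ k' * V ^ l' : Rˣ) : R) (z ^ r) := by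
      rw [Units.val_mul]
      exact ((hUz.pow_right r).units_zpow_left k').mul_left ((hVz.pow_right r).units_zpow_left l')
    rw [hw, Units.smul_def, smul_smul, hcm.eq, mul_smul, ← Units.smul_def, hfix]
  have key (v u : M) (h : v + k' • (-l) • u + l' • k • u = v) : (l' * k - k' * l) • u = 0 := by
    linear_combination (norm := module) h
  have hlin : (l' * k - k' * l) • z • w = 0 := by
    rw [mul_smul, hVl, smul_add, hUl, smul_comm (U ^ k'), smul_comm (U ^ k'), hUu'] at hfw
    exact key _ _ hfw
  -- The first-order relation says that `(k', l')` is parallel to `(k, l)`;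
  -- `q` is the proportionality factor.
  have hdet : l' * k - k' * l = 0 := (smul_eq_zero.1 hlin).resolve_right h1
  set q := a * k' + b * l' with hq
  have hk' : k' = k * q := by rw [hq]; linear_combination (-k') * hab - b * hdet
  have hl' : l' = l * q := by rw [hq]; linear_combination (-l') * hab + a * hdet
  have hq0 : q ≠ 0 := fun h => hne (by rw [hk', hl', h]; simp)
  have hck : Commute (U ^ k) (V ^ l) := (hc.zpow_right l).zpow_left k
  refine smul_eq_of_zpow_smul_eq (q := q) ?_ hq0 ?_
  · rw [Units.val_mul]
    refine isNilpotent_mul_sub_one ?_ (isNilpotent_zpow_sub_one hU k)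
      (isNilpotent_zpow_sub_one hV l)
    rw [commute_iff_eq, ← Units.val_mul, ← Units.val_mul, hck.eq]
  · rw [hck.mul_zpow, ← zpow_mul, ← zpow_mul, ← hk', ← hl', hfix]

end UnipotentAlgebra


/-! ### Cyclic groups and saturated lattices -/

/-- A commuting pair satisfying a primitive relation `u ^ k * v ^ l = 1` lies in a cyclic group,
since `ℤ² / ℤ(k, l)` is infinite cyclic. -/
lemma exists_zpow_generator {G : Type*} [Group G] {u v : G} (hc : Commute u v) {k l : ℤ}
    (hkl : IsCoprime k l) (h : u ^ k * v ^ l = 1) :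
    ∃ s t : ℤ, (u ^ s * v ^ t) ^ (-l) = u ∧ (u ^ s * v ^ t) ^ k = v := by
  obtain ⟨t, s, hts⟩ := hkl
  have hpow (i j e : ℤ) : (u ^ i * v ^ j) ^ e = u ^ (i * e) * v ^ (j * e) := by
    rw [((hc.zpow_right j).zpow_left i).mul_zpow, zpow_mul, zpow_mul]
  have h1 (e : ℤ) : u ^ (k * e) * v ^ (l * e) = 1 := by rw [← hpow, h, one_zpow]
  refine ⟨-s, t, ?_, ?_⟩
  · rw [hpow, show -s * -l = 1 + k * (-t) by linear_combination hts, zpow_add, zpow_one,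
      show t * -l = l * (-t) by ring, mul_assoc, h1, mul_one]
  · rw [hpow, show t * k = l * (-s) + 1 by linear_combination hts, zpow_add, zpow_one,
      show -s * k = k * (-s) by ring, ← mul_assoc, h1, one_mul]

/-- A saturated sublattice `L` of `ℤ^d` is a direct summand, so that a basis of `L` forms the rows
of an integer matrix `P` with an integer right inverse `Q`. -/
lemma exists_matrix_of_saturated {d : ℕ} (L : Submodule ℤ (IVec d))
    (hL : ∀ (q : ℤ) (v : IVec d), q ≠ 0 → q • v ∈ L → v ∈ L) :
    ∃ (n : ℕ) (P : Matrix (Fin n) (Fin d) ℤ) (Q : Matrix (Fin d) (Fin n) ℤ),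
      P * Q = 1 ∧ (∀ i, P i ∈ L) ∧ ∀ v ∈ L, ∃ c : Fin n → ℤ, Matrix.vecMul c P = v := by
  have htf : Module.IsTorsionFree ℤ (IVec d ⧸ L) := by
    refine .of_smul_eq_zero fun q x hq => ?_
    obtain ⟨v, rfl⟩ := L.mkQ_surjective x
    rw [← map_smul, Submodule.mkQ_apply, Submodule.Quotient.mk_eq_zero] at hq
    rw [Submodule.mkQ_apply, Submodule.Quotient.mk_eq_zero]
    exact or_iff_not_imp_left.2 fun h0 => hL q v h0 hq
  -- `ℤ^d ⧸ L` is finitely generated and torsion-free, hence free, and the quotient map splits.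
  obtain ⟨s, hs⟩ := L.mkQ.exists_rightInverse_of_surjective (Submodule.range_mkQ L)
  have hp : ∀ v, (LinearMap.id - s ∘ₗ L.mkQ : IVec d →ₗ[ℤ] IVec d) v ∈ L := fun v => by
    rw [← Submodule.Quotient.mk_eq_zero, ← Submodule.mkQ_apply, LinearMap.sub_apply, map_sub,
      LinearMap.id_apply, sub_eq_zero]
    exact (LinearMap.congr_fun hs (L.mkQ v)).symm
  set p : IVec d →ₗ[ℤ] L := LinearMap.codRestrict L _ hp with hpdef
  have hpL (v : L) : p v = v := by
    ext1
    have : L.mkQ (v : IVec d) = 0 := by simp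
    rw [hpdef, LinearMap.codRestrict_apply, LinearMap.sub_apply, LinearMap.comp_apply, this,
      map_zero, sub_zero, LinearMap.id_apply]
  let b := Module.finBasis ℤ L
  refine ⟨_, .of fun i => (b i : IVec d), .of fun c j => b.coord j (p fun i => if c = i then 1 else 0), ?_,
    fun i => (b i).2, fun v hv => ⟨b.repr ⟨v, hv⟩, ?_⟩⟩
  · ext i j
    have h1 : b.repr (p (b i : IVec d)) j = (1 : Matrix _ _ ℤ) i j := by
      rw [hpL, b.repr_self, Finsupp.single_apply, Matrix.one_apply]
    rw [← h1, Matrix.mul_apply]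
    exact (LinearMap.pi_apply_eq_sum_univ (b.coord j ∘ₗ p) (b i : IVec d)).symm
  · have h := congrArg Subtype.val (b.sum_repr ⟨v, hv⟩)
    rw [Submodule.coe_sum] at h
    ext j
    have hj := congrFun h j
    rw [Finset.sum_apply] at hj
    exact hj

/-! ### The pairing between frequencies and points -/

/-- The pairing `⟨v, x⟩` of an integer frequency with a point of `ℝ^d`. -/
def pairing {d : ℕ} (v : IVec d) (x : Vec d) : ℝ := ∑ i, (v i : ℝ) * x i

section Pairing
variable {d : ℕ}

lemma pairing_eq_dotProduct (v : IVec d) (x : Vec d) :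
    pairing v x = (fun i => (v i : ℝ)) ⬝ᵥ x := rfl

lemma pairing_add (v : IVec d) (x y : Vec d) : pairing v (x + y) = pairing v x + pairing v y :=
  dotProduct_add _ _ _

lemma pairing_sub (v : IVec d) (x y : Vec d) : pairing v (x - y) = pairing v x - pairing v y :=
  dotProduct_sub _ _ _

lemma pairing_smul (v : IVec d) (t : ℝ) (x : Vec d) : pairing v (t • x) = t * pairing v x :=
  dotProduct_smul _ _ _

lemma add_pairing (v w : IVec d) (x : Vec d) : pairing (v + w) x = pairing v x + pairing w x := by
  simp [pairing, add_mul, Finset.sum_add_distrib]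

lemma zsmul_pairing (q : ℤ) (v : IVec d) (x : Vec d) : pairing (q • v) x = q * pairing v x := by
  simp [pairing, mul_assoc, Finset.mul_sum]

lemma pairing_rmat (A : Mat d) (v : IVec d) (x : Vec d) :
    pairing v ((rmat A).mulVec x) = pairing (Matrix.vecMul v A) x := by
  rw [pairing_eq_dotProduct, pairing_eq_dotProduct, Matrix.dotProduct_mulVec]
  congr 1
  ext j
  simp [Matrix.vecMul, dotProduct, rmat]

/-- If `e(v, ·) = 1` on a whole real line `ℝ x`, then `⟨v, x⟩` vanishes, not merely modulo `ℤ`. -/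
lemma pairing_eq_zero_of_eF {v : IVec d} {x : Vec d} (h : ∀ t : ℝ, eF v (t • x) = 1) :
    pairing v x = 0 := by
  by_contra hne
  -- At this parameter the phase equals `1 / 2`, and `e` takes the value `-1`.
  have h1 := h (1 / (2 * pairing v x))
  have h2 : (2 * (Real.pi : ℂ) * Complex.I *
      ∑ i, (v i : ℂ) * (((1 / (2 * pairing v x)) • x) i : ℂ)) = Real.pi * Complex.I := by
    have h3 : (∑ i, (v i : ℂ) * (((1 / (2 * pairing v x)) • x) i : ℂ))
        = ((pairing v ((1 / (2 * pairing v x)) • x) : ℝ) : ℂ) := by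
      simp [pairing]
    rw [h3, pairing_smul]
    have h4 : 1 / (2 * pairing v x) * pairing v x = 1 / 2 := by field_simp
    rw [h4]
    push_cast
    ring
  rw [eF, h2, Complex.exp_pi_mul_I] at h1
  norm_num at h1

end Pairing

/-! ### Groups of affine maps -/

section Affine
open scoped Matrix.Module

/-- The affine bijection `x ↦ U x + γ` of `E^n` with invertible integer linear part, where matrices
act through the `ℤ`-module structure of `E`. It is used for `E = ℝ` (lifts) and for the circle. -/
def affPerm {n : ℕ} {E : Type*} [AddCommGroup E] (U : (Mat n)ˣ) (γ : Fin n → E) :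
    Equiv.Perm (Fin n → E) :=
  (MulAction.toPerm U).trans (Equiv.addRight γ)

lemma affPerm_apply {n : ℕ} {E : Type*} [AddCommGroup E] (U : (Mat n)ˣ) (γ x : Fin n → E) :
    affPerm U γ x = U • x + γ := rfl

lemma affPerm_real {d : ℕ} (U : (Mat d)ˣ) (γ x : Vec d) :
    affPerm U γ x = (rmat (U : Mat d)).mulVec x + γ := by
  ext i
  simp [affPerm_apply, Units.smul_def, Matrix.mulVec, dotProduct, rmat]

lemma coe_affPerm_torus {n : ℕ} (U : (Mat n)ˣ) (γ : Td n) :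
    ⇑(affPerm U γ) = affT (U : Mat n) γ := rfl

/-- Affine bijections of the torus with invertible integer linear part, as a group. -/
def affSubgroup (n : ℕ) : Subgroup (Equiv.Perm (Td n)) where
  carrier := {f | ∃ (U : (Mat n)ˣ) (γ : Td n), f = affPerm U γ}
  one_mem' := ⟨1, 0, by ext1 x; simp [affPerm_apply]⟩
  mul_mem' := by
    rintro _ _ ⟨U, γ, rfl⟩ ⟨V, δ, rfl⟩
    refine ⟨U * V, U • δ + γ, ?_⟩
    ext1 x
    simp only [Equiv.Perm.mul_apply, affPerm_apply, smul_add, mul_smul, add_assoc]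
  inv_mem' := by
    rintro _ ⟨U, γ, rfl⟩
    refine ⟨U⁻¹, -(U⁻¹ • γ), ?_⟩
    ext1 x
    rw [Equiv.Perm.inv_eq_iff_eq, affPerm_apply, affPerm_apply, smul_add, smul_neg,
      smul_inv_smul, smul_inv_smul, neg_add_cancel_right]

lemma affPerm_commute {d : ℕ} {U V : (Mat d)ˣ} (hc : Commute U V) {α β : Vec d}
    (h : TAB (U : Mat d) (V : Mat d) α β) : Commute (affPerm U α) (affPerm V β) := by
  have h' : U • β + α = V • α + β := by
    have h1 : ∀ (W : (Mat d)ˣ) (x : Vec d), (rmat ((W : Mat d) - 1)).mulVec x = W • x - x := by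
      intro W x
      ext i
      simp [Units.smul_def, Matrix.mulVec, dotProduct, rmat, sub_mul, Matrix.one_apply]
    rw [TAB, h1, h1, sub_eq_sub_iff_add_eq_add] at h
    exact h
  rw [commute_iff_eq]
  ext1 x
  simp only [Equiv.Perm.mul_apply, affPerm_apply, smul_add, smul_smul, add_assoc, hc.eq, h']

/-- Pairs `(f, D)` of a bijection of `ℝ^d` and an integer matrix such that `D` is inverse
transpose to the linear part of `f`: `⟨D v, f x - f y⟩ = ⟨v, x - y⟩`. Phrasing this as a subgroup
makes it stable under integer powers. -/
def dualPairSubgroup (d : ℕ) : Subgroup (Equiv.Perm (Vec d) × (Mat d)ˣ) where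
  carrier := {p | ∀ v x y, pairing (p.2 • v) (p.1 x - p.1 y) = pairing v (x - y)}
  one_mem' := fun v x y => by simp
  mul_mem' := by
    intro p q hp hq v x y
    rw [Prod.snd_mul, Prod.fst_mul, mul_smul, Equiv.Perm.mul_apply, Equiv.Perm.mul_apply, hp, hq]
  inv_mem' := by
    intro p hp v x y
    have := hp (p.2⁻¹ • v) (p.1⁻¹ x) (p.1⁻¹ y)
    rw [smul_inv_smul, Equiv.Perm.inv_def, Equiv.apply_symm_apply, Equiv.apply_symm_apply] at this
    exact this.symm

/-- Pairs of bijections intertwined by `π`; as a subgroup, it is stable under integer powers. -/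
def semiconjSubgroup {X Y : Type*} (π : X → Y) : Subgroup (Equiv.Perm X × Equiv.Perm Y) where
  carrier := {p | ∀ x, π (p.1 x) = p.2 (π x)}
  one_mem' := fun x => rfl
  mul_mem' := by
    intro p q hp hq x
    rw [Prod.fst_mul, Prod.snd_mul, Equiv.Perm.mul_apply, Equiv.Perm.mul_apply, hp, hq]
  inv_mem' := by
    intro p hp x
    have := hp (p.1⁻¹ x)
    rw [Equiv.Perm.inv_def, Equiv.apply_symm_apply] at this
    exact (Equiv.Perm.inv_eq_iff_eq.2 this).symm

end Affine

/-! ### Integer-linear projections of tori -/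

section Torus

lemma projT_mul {n p q : ℕ} (P : Matrix (Fin n) (Fin p) ℤ) (Q : Matrix (Fin p) (Fin q) ℤ)
    (x : Td q) : projT (P * Q) x = projT P (projT Q x) := by
  ext i
  simp only [projT, Matrix.mul_apply, Finset.sum_smul, Finset.smul_sum, mul_smul]
  exact Finset.sum_comm

lemma projT_add {n p : ℕ} (P : Matrix (Fin n) (Fin p) ℤ) (x y : Td p) :
    projT P (x + y) = projT P x + projT P y := by
  ext i
  simp [projT, Finset.sum_add_distrib]

lemma projT_one {n : ℕ} (x : Td n) : projT 1 x = x := by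
  ext i
  simp [projT, Matrix.one_apply]

lemma affT_eq {n : ℕ} (M : Mat n) (γ x : Td n) : affT M γ x = projT M x + γ := rfl

lemma projT_toT {n d : ℕ} (P : Matrix (Fin n) (Fin d) ℤ) (x : Vec d) (i : Fin n) :
    projT P (toT x) i = ((pairing (P i) x : ℝ) : AddCircle (1 : ℝ)) := by
  have h : ∀ y : ℝ, ((y : ℝ) : AddCircle (1 : ℝ)) = QuotientAddGroup.mk' _ y := fun _ => rfl
  simp only [projT, toT, pairing, h, map_sum, ← zsmul_eq_mul, map_zsmul]

lemma toT_add {d : ℕ} (x y : Vec d) : toT (x + y) = toT x + toT y := rfl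

lemma toT_surjective {d : ℕ} : Function.Surjective (toT (d := d)) := fun y => by
  choose x hx using fun i => QuotientAddGroup.mk_surjective (y i)
  exact ⟨x, funext hx⟩

lemma toT_rmat {d : ℕ} (A : Mat d) (x : Vec d) : toT ((rmat A).mulVec x) = projT A (toT x) := by
  ext i
  rw [projT_toT]
  rfl

lemma projT_comp_affT {n d : ℕ} {P : Matrix (Fin n) (Fin d) ℤ} {A : Mat d} {A' : Mat n}
    (h : P * A = A' * P) (γ : Td d) :
    projT P ∘ affT A γ = affT A' (projT P γ) ∘ projT P := by
  funext x
  simp only [Function.comp_apply, affT_eq, projT_add, ← projT_mul, h]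

end Torus

/-! ### The factor cut out by the frequencies invariant under a group element -/

lemma IsParabolic.isUnit {d : ℕ} {A : Mat d} (h : IsParabolic A) : IsUnit A := by
  obtain ⟨S, hS⟩ := h
  simpa using IsNilpotent.isUnit_add_one (r := A - 1) ⟨S, hS⟩

/-- Unipotence passes to a quotient of tori. -/
lemma isParabolic_of_mul_eq {n d : ℕ} {P : Matrix (Fin n) (Fin d) ℤ} {Q : Matrix (Fin d) (Fin n) ℤ}
    (hPQ : P * Q = 1) {A : Mat d} {A' : Mat n} (hA : IsParabolic A) (h : P * A = A' * P) :
    IsParabolic A' := by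
  obtain ⟨S, hS⟩ := hA
  refine ⟨S, ?_⟩
  have hpow : ∀ j : ℕ, P * (A - 1) ^ j = (A' - 1) ^ j * P := by
    intro j
    induction j with
    | zero => simp
    | succ j ih =>
      rw [pow_succ, ← Matrix.mul_assoc, ih, Matrix.mul_assoc, Matrix.mul_sub, h, Matrix.mul_one,
        pow_succ, Matrix.mul_assoc, Matrix.sub_mul, Matrix.one_mul]
  have := congrArg (· * Q) (hpow S)
  simpa [hS, Matrix.mul_assoc, hPQ] using this.symm

/-- The geometric step. Let `g = a ^ k b ^ l`, with `a`, `b` the commuting lifts. The frequencies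
`v` with `⟨v, g x⟩ = ⟨v, x⟩` for all real `x` form a saturated sublattice `L` of `ℤ^d`, invariant
under `Aᵀ` and `Bᵀ` because `g` commutes with `a` and `b`. Projecting along a basis of `L` gives a
factor on which `g` is the identity, so the factor action is cyclic; it is not by translations as
soon as `L` contains a frequency `m` moved by the dual action. -/
lemma exists_genuinelyParabolic_factor {d : ℕ} {U V : (Mat d)ˣ} {α β : Vec d}
    (hU : IsParabolic (U : Mat d)) (hV : IsParabolic (V : Mat d))
    (hcomm : Commute (affPerm U α) (affPerm V β)) {k l : ℤ} (hkl : IsCoprime k l) {m : IVec d}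
    (hm : ∀ x, pairing m ((affPerm U α ^ k * affPerm V β ^ l) x) = pairing m x)
    (hmov : Matrix.vecMul m (U : Mat d) ≠ m ∨ Matrix.vecMul m (V : Mat d) ≠ m) :
    ∃ F : RankOneFactorData d U V α β, F.IsGenuinelyParabolic := by
  set g := affPerm U α ^ k * affPerm V β ^ l with hg
  let L : Submodule ℤ (IVec d) :=
    { carrier := {v | ∀ x, pairing v (g x) = pairing v x}
      add_mem' := fun hv hw x => by rw [add_pairing, add_pairing, hv, hw]
      zero_mem' := fun x => by simp [pairing]
      smul_mem' := fun q v hv x => by rw [zsmul_pairing, zsmul_pairing, hv] }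
  have hsat (q : ℤ) (v : IVec d) (hq : q ≠ 0) (hv : q • v ∈ L) : v ∈ L := fun x => by
    have := hv x
    rw [zsmul_pairing, zsmul_pairing] at this
    exact mul_left_cancel₀ (Int.cast_ne_zero.2 hq) this
  have hinv (W : (Mat d)ˣ) (γ : Vec d) (hc : Commute (affPerm W γ) g) (v : IVec d) (hv : v ∈ L) :
      Matrix.vecMul v (W : Mat d) ∈ L := fun x => by
    have hlin (y : Vec d) : pairing (Matrix.vecMul v (W : Mat d)) y
        = pairing v (affPerm W γ y) - pairing v γ := by
      rw [affPerm_real, pairing_add, pairing_rmat, add_sub_cancel_right]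
    rw [hlin, hlin, ← Equiv.Perm.mul_apply, hc.eq, Equiv.Perm.mul_apply, hv]
  have hUg : Commute (affPerm U α) g :=
    ((Commute.refl _).zpow_right k).mul_right (hcomm.zpow_right l)
  have hVg : Commute (affPerm V β) g :=
    (hcomm.symm.zpow_right k).mul_right ((Commute.refl _).zpow_right l)
  obtain ⟨n, P, Q, hPQ, hPL, hspan⟩ := exists_matrix_of_saturated L hsat
  have hrestrict (W : Mat d) (hW : ∀ v ∈ L, Matrix.vecMul v W ∈ L) :
      ∃ W' : Mat n, P * W = W' * P := by
    choose c hc using fun i => hspan _ (hW _ (hPL i))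
    exact ⟨.of c, by ext i j; exact (congrFun (hc i) j).symm⟩
  obtain ⟨A', hA'⟩ := hrestrict U (hinv U α hUg)
  obtain ⟨B', hB'⟩ := hrestrict V (hinv V β hVg)
  have hA'p := isParabolic_of_mul_eq hPQ hU hA'
  have hB'p := isParabolic_of_mul_eq hPQ hV hB'
  obtain ⟨U', rfl⟩ := hA'p.isUnit
  obtain ⟨V', rfl⟩ := hB'p.isUnit
  obtain ⟨cm, hcm⟩ := hspan m hm
  have hne : (U' : Mat n) ≠ 1 ∨ (V' : Mat n) ≠ 1 := by
    have key {W : Mat d} {W' : Mat n} (h : P * W = W' * P) (h1 : W' = 1) :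
        Matrix.vecMul m W = m := by
      rw [← hcm, Matrix.vecMul_vecMul, h, h1, Matrix.one_mul]
    exact hmov.imp (fun h h1 => h (key hA' h1)) (fun h h1 => h (key hB' h1))
  have hn : 0 < n := by
    rcases Nat.eq_zero_or_pos n with rfl | h
    · exact (hne.elim (fun h => h (Subsingleton.elim _ _)) fun h => h (Subsingleton.elim _ _)).elim
    · exact h
  -- The generators of the factor action.
  set u := affPerm U' (projT P (toT α)) with hu
  set v := affPerm V' (projT P (toT β)) with hv
  let π : Vec d → Td n := fun x => projT P (toT x)
  have hπ : Function.Surjective π := fun y => by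
    obtain ⟨x, hx⟩ := toT_surjective (projT Q y)
    exact ⟨x, by simp only [π, hx, ← projT_mul, hPQ, projT_one]⟩
  have hsemi {W : (Mat d)ˣ} {W' : (Mat n)ˣ} (h : P * (W : Mat d) = (W' : Mat n) * P) (γ : Vec d) :
      (affPerm W γ, affPerm W' (projT P (toT γ))) ∈ semiconjSubgroup π := fun x => by
    simp only [π, affPerm_real, toT_add, toT_rmat, coe_affPerm_torus]
    exact congrFun (projT_comp_affT h (toT γ)) (toT x)
  have hsu := hsemi hA' α
  have hsv := hsemi hB' β
  have huv : Commute u v := by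
    rw [commute_iff_eq]
    ext1 y
    obtain ⟨x, rfl⟩ := hπ y
    have h1 := mul_mem hsu hsv x
    have h2 := mul_mem hsv hsu x
    simp only [Prod.mk_mul_mk] at h1 h2
    rw [← h1, ← h2, hcomm.eq]
  have hone : u ^ k * v ^ l = 1 := by
    ext1 y
    obtain ⟨x, rfl⟩ := hπ y
    have h1 := mul_mem (zpow_mem hsu k) (zpow_mem hsv l) x
    simp only [Prod.pow_mk, Prod.mk_mul_mk] at h1
    rw [← h1, Equiv.Perm.one_apply]
    ext i
    simp only [π, projT_toT]
    rw [hPL i x]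
  obtain ⟨s, t, h1, h2⟩ := exists_zpow_generator huv hkl hone
  have hc : u ^ s * v ^ t ∈ affSubgroup n :=
    mul_mem (zpow_mem (show u ∈ affSubgroup n from ⟨_, _, rfl⟩) _)
      (zpow_mem (show v ∈ affSubgroup n from ⟨_, _, rfl⟩) _)
  obtain ⟨W, γ, hW⟩ := hc
  refine ⟨{ n := n, npos := hn, P := P
            surj := fun y => ⟨Q.mulVec y, by simp [Matrix.mulVec_mulVec, hPQ]⟩
            A' := U', B' := V', α' := projT P (toT α), β' := projT P (toT β)
            intertwineA := projT_comp_affT hA' _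
            intertwineB := projT_comp_affT hB' _
            rankOne := ⟨u ^ s * v ^ t, ⟨W, γ, by rw [hW, coe_affPerm_torus]⟩,
              ⟨u, ⟨-l, h1⟩, rfl⟩, ⟨v, ⟨k, h2⟩, rfl⟩⟩ }, ?_⟩
  exact hne.imp (fun h => ⟨hA'p, h⟩) (fun h => ⟨hB'p, h⟩)

/-! ### Translation families and the dual action -/

/-- The translation parts are the images of the origin under `a ^ i b ^ j`. -/
lemma isTransFamily_affPerm {d : ℕ} {U V : (Mat d)ˣ} {α β : Vec d}
    (hcomm : Commute (affPerm U α) (affPerm V β)) :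
    IsTransFamily (U : Mat d) (V : Mat d) α β
      (fun i j => (affPerm U α ^ i * affPerm V β ^ j) 0) := by
  refine ⟨rfl, fun i j => ?_, fun i j => ?_⟩
  · beta_reduce
    rw [add_comm i, zpow_one_add, mul_assoc, Equiv.Perm.mul_apply, affPerm_real, add_comm]
  · beta_reduce
    rw [add_comm j, zpow_one_add, ← mul_assoc, ((Commute.zpow_left hcomm i)).eq, mul_assoc,
      Equiv.Perm.mul_apply, affPerm_real, add_comm]

/-- Translation parts scale linearly along rays of `𝒯(A,B)`. -/
lemma IsTransFamily.smul {d : ℕ} {A B : Mat d} {α β : Vec d} {c : ℤ → ℤ → Vec d}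
    (h : IsTransFamily A B α β c) (t : ℝ) :
    IsTransFamily A B (t • α) (t • β) (fun i j => t • c i j) := by
  obtain ⟨h0, h1, h2⟩ := h
  refine ⟨by simp [h0], fun i j => ?_, fun i j => ?_⟩
  · beta_reduce
    rw [h1, smul_add, Matrix.mulVec_smul]
  · beta_reduce
    rw [h2, smul_add, Matrix.mulVec_smul]

lemma isCoprime_of_normalizedPair {k l : ℤ} (h : NormalizedPair k l) : IsCoprime k l := by
  rcases h with ⟨rfl, rfl⟩ | ⟨rfl, rfl⟩ | ⟨h, -⟩
  · exact isCoprime_one_left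
  · exact isCoprime_one_right
  · exact Int.isCoprime_iff_gcd_eq_one.2 h

lemma zpowM_coe {d : ℕ} (U : (Mat d)ˣ) (j : ℤ) :
    zpowM (U : Mat d) j = ((U ^ j : (Mat d)ˣ) : Mat d) := by
  cases j with
  | ofNat i => simp [zpowM]
  | negSucc i => simp [zpowM, zpow_negSucc, Matrix.coe_units_inv]

section DualAction
open scoped Matrix.Module

/-- The dual matrix `(Uᵀ)⁻¹`, as a unit. -/
noncomputable def dualUnit {d : ℕ} (U : (Mat d)ˣ) : (Mat d)ˣ :=
  ((Matrix.isUnit_transpose (U : Mat d)).2 U.isUnit).unit⁻¹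

variable {d : ℕ} (U : (Mat d)ˣ)

lemma coe_dualUnit : ((dualUnit U : (Mat d)ˣ) : Mat d) = dual (U : Mat d) := by
  rw [dualUnit, Matrix.coe_units_inv, IsUnit.unit_spec, dual]

lemma coe_dualUnit_inv : (((dualUnit U)⁻¹ : (Mat d)ˣ) : Mat d) = (U : Mat d).transpose := by
  rw [dualUnit, inv_inv, IsUnit.unit_spec]

lemma vecMul_eq_dualUnit_inv_smul (v : IVec d) :
    Matrix.vecMul v (U : Mat d) = (dualUnit U)⁻¹ • v := by
  rw [← Matrix.mulVec_transpose, ← coe_dualUnit_inv]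
  rfl

lemma mem_dualPairSubgroup (γ : Vec d) : (affPerm U γ, dualUnit U) ∈ dualPairSubgroup d := by
  intro v x y
  rw [affPerm_real, affPerm_real, add_sub_add_right_eq_sub, ← Matrix.mulVec_sub, pairing_rmat,
    vecMul_eq_dualUnit_inv_smul, inv_smul_smul]

lemma isNilpotent_dualUnit_sub_one (hU : IsParabolic (U : Mat d)) :
    IsNilpotent ((dualUnit U : Mat d) - 1) := by
  have h : IsNilpotent ((((dualUnit U)⁻¹ : (Mat d)ˣ) : Mat d) - 1) := by
    obtain ⟨S, hS⟩ := hU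
    refine ⟨S, ?_⟩
    rw [coe_dualUnit_inv, ← Matrix.transpose_one, ← Matrix.transpose_sub, ← Matrix.transpose_pow,
      hS, Matrix.transpose_zero]
  simpa using isNilpotent_zpow_sub_one h (-1)

lemma dualUnit_commute {U V : (Mat d)ˣ} (h : Commute U V) : Commute (dualUnit U) (dualUnit V) := by
  rw [← Commute.inv_inv_iff, commute_iff_eq]
  ext1
  rw [Units.val_mul, Units.val_mul, coe_dualUnit_inv, coe_dualUnit_inv, ← Matrix.transpose_mul,
    ← Matrix.transpose_mul, ← Units.val_mul, ← Units.val_mul, h.eq]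

lemma dualUnit_resonance {U V : (Mat d)ˣ} (hU : IsParabolic (U : Mat d))
    (hV : IsParabolic (V : Mat d)) (hc : Commute U V) {m : IVec d} {k l : ℤ}
    (hres : Resonant (U : Mat d) (V : Mat d) m) (hpair : IsResPair (U : Mat d) (V : Mat d) m k l) :
    (dualUnit U ^ k * dualUnit V ^ l) • m = m := by
  obtain ⟨-, ⟨k', l', hne, hfix⟩, hmov⟩ := hres
  obtain ⟨hnorm, hpair⟩ := hpair
  rw [← coe_dualUnit, ← coe_dualUnit, zpowM_coe, zpowM_coe, ← Units.val_mul] at hfix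
  rw [← coe_dualUnit, ← coe_dualUnit] at hmov
  rw [hat, hat, ← coe_dualUnit, ← coe_dualUnit] at hpair
  exact resonance_fixes (dualUnit_commute hc) (isNilpotent_dualUnit_sub_one U hU)
    (isNilpotent_dualUnit_sub_one V hV) (isCoprime_of_normalizedPair hnorm) hpair hne hfix hmov

lemma vecMul_ne_of_resonant {U V : (Mat d)ˣ} {m : IVec d}
    (hres : Resonant (U : Mat d) (V : Mat d) m) :
    Matrix.vecMul m (U : Mat d) ≠ m ∨ Matrix.vecMul m (V : Mat d) ≠ m := by
  have key {W : (Mat d)ˣ} (h : (dual (W : Mat d)).mulVec m ≠ m) :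
      Matrix.vecMul m (W : Mat d) ≠ m := by
    rw [vecMul_eq_dualUnit_inv_smul, ne_eq, inv_smul_eq_iff]
    rw [← coe_dualUnit] at h
    exact fun h' => h h'.symm
  exact hres.2.2.imp key key

end DualAction

/-- **Lemma (identically vanishing resonance forces a genuinely parabolic rank-one
factor).** Suppose there is a resonant vector `m` with resonance pair `(k,l)` such that
`e(m, α_{k,l}) = 1` for every `(α,β) ∈ 𝒯(A,B)`. Then for every `(α,β) ∈ 𝒯(A,B)` the
affine action `⟨a,b⟩` has a rank-one factor that is genuinely parabolic; in particular
`⟨A,B⟩` is locked. -/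
theorem resonance_forces_parabolic_factor (d : ℕ) (A B : Mat d)
    (hApar : IsParabolic A) (hBpar : IsParabolic B)
    (hcomm : A * B = B * A)
    (m : IVec d) (k l : ℤ)
    (hres : Resonant A B m) (hpair : IsResPair A B m k l)
    (hfix : ∀ α β : Vec d, TAB A B α β → ∀ c : ℤ → ℤ → Vec d,
      IsTransFamily A B α β c → eF m (c k l) = 1) :
    (∀ α β : Vec d, TAB A B α β →
      ∃ F : RankOneFactorData d A B α β, F.IsGenuinelyParabolic) ∧
    IsLocked A B := by
  obtain ⟨U, rfl⟩ := hApar.isUnit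
  obtain ⟨V, rfl⟩ := hBpar.isUnit
  have hUV : Commute U V := Units.ext hcomm
  have main (α β : Vec d) (hT : TAB (U : Mat d) (V : Mat d) α β) :
      ∃ F : RankOneFactorData d U V α β, F.IsGenuinelyParabolic := by
    have hab := affPerm_commute hUV hT
    refine exists_genuinelyParabolic_factor hApar hBpar hab
      (isCoprime_of_normalizedPair hpair.1) (fun x => ?_) (vecMul_ne_of_resonant hres)
    -- `𝒯(A,B)` is a vector space, so the hypothesis applies to all multiples of `(α, β)`.
    have h0 : pairing m ((affPerm U α ^ k * affPerm V β ^ l) 0) = 0 := by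
      refine pairing_eq_zero_of_eF fun t => ?_
      refine hfix (t • α) (t • β) ?_ _ ((isTransFamily_affPerm hab).smul t)
      rw [TAB, Matrix.mulVec_smul, Matrix.mulVec_smul, hT]
    -- The dual of the linear part of `a ^ k b ^ l` fixes `m`, so `⟨m, ·⟩` only sees its
    -- translation part, which `m` annihilates.
    have h1 := mul_mem (zpow_mem (mem_dualPairSubgroup U α) k)
      (zpow_mem (mem_dualPairSubgroup V β) l) m x 0
    simp only [Prod.pow_mk, Prod.mk_mul_mk] at h1
    rw [dualUnit_resonance hApar hBpar hUV hres hpair, pairing_sub, h0, sub_zero, sub_zero] at h1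
    exact h1
  exact ⟨main, fun α β hT => (main α β hT).imp fun _ hF => Or.inr hF⟩

end ParabolicKAM
end

section
/- Let ⟨a,b⟩ be an unlocked parabolic affine ℤ²-action of step S (i.e. the linear parts A,B are unipotent with (B−Id)^S = 0) with a = A+α step-2. Set η = 0.99/S. Then for every sufficiently large r (in particular for r > 8/η) there exists a constant c = c(r,A,B) > 0 such that for every non-resonant m ∈ C₃ which is the lowest point on its Ā-orbit, at least one of the following two estimates holds: Σ_{k∈ℤ} Σ_{l≥0} |Ā^kB̄^l m|^{−r} ≤ c|m|^{−ηr+8}, or Σ_{k∈ℤ} Σ_{l<0} |Ā^kB̄^l m|^{−r} ≤ c|m|^{−ηr+8}. -/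
/-!
Write `v = Â m`. Since `A` has step two and the duals commute, the orbit points are
`Ā^k B̄^l m = B̄^l (m + k v)`, so for fixed `l` they form an arithmetic progression with the nonzero
integer difference `B̄^l v` (`v ≠ 0` because `m` is not resonant). Their norms `p` are at least `1`
and at least of the order of `1 + |k - κ_l|` for some `κ_l` (`exists_center`). The point is to find
a half-plane `l ≥ 0` or `l ≤ 0` on which, in addition, `|m| ≤ C p^S` and `|l| + 1 ≤ C |m|² p` with `C` depending on `A, B` only
(`exists_good`). Then `p^{-r} = p^{-(r-4)} p^{-2} p^{-2}`, where the first factor gives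
`|m|^{-(r-4)/S}`, the second `|m|⁴ (|l|+1)^{-2}` and the third `(1 + |k - κ_l|)^{-2}`; summing
gives the claim (`term_bound`, `double_tsum_le`).

The growth comes from one of two mechanisms.

* If `B̂ v ≠ 0`, take `N = B̂^i Â`, and if `B̂ v = 0 ≠ B̂² m`, take `N = B̂^i` with `i ≥ 1`, where `i`
  is the last index with `B̂ N m ≠ 0`. As `N v = 0`, one has
  `N B̄^l (m + k v) = N m + l B̂ N m`, independently of `k`. This is at least `|l|` in norm for all
  `l` of the sign for which `l ⟪N m, B̂ N m⟫ ≥ 0` (`sign_choice`), so `|l| ≤ C p`. Since `B̄^{-l}`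
  has norm `O(|l|^{S-1})` and `m` is lowest, also `|m| ≤ |m + k v| ≤ C p^S` (`good_of_linear`).
* If `B̂ v = 0 = B̂² m`, the orbit is `m + l b + k v` with `b = B̂ m`, and `b` is not parallel to
  `v`, because a rational relation between them would make `m` resonant. Projecting along `v`
  and choosing the sign of `l` gives `p ≥ |m^⊥ + l b^⊥| ≥ max (|m^⊥|, |l| |b^⊥|)`. Here
  `|b^⊥| ≥ |v|^{-2}` by integrality, and `|m| ≤ C |m^⊥|` because `m` is lowest and
  `v = Â m^⊥` (`good_of_planar`, `inorm_le_rej`).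
-/

open MeasureTheory

namespace ParabolicKAM

/-! ### Euclidean norms of integer vectors -/

/-- An integer vector viewed in Euclidean space, so that `inorm` becomes a Hilbert space norm. -/
noncomputable def emb {d : ℕ} (m : IVec d) : EuclideanSpace ℝ (Fin d) :=
  WithLp.toLp 2 fun i => (m i : ℝ)

lemma norm_emb {d : ℕ} (m : IVec d) : ‖emb m‖ = inorm m := by
  simp [emb, inorm, EuclideanSpace.norm_eq]

lemma emb_add {d : ℕ} (m n : IVec d) : emb (m + n) = emb m + emb n := by
  ext i; simp [emb]

lemma emb_zsmul {d : ℕ} (k : ℤ) (n : IVec d) : emb (k • n) = (k : ℝ) • emb n := by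
  ext i; simp [emb]

lemma inner_emb {d : ℕ} (m n : IVec d) : inner ℝ (emb m) (emb n) = (iprod m n : ℝ) := by
  simp [emb, iprod, PiLp.inner_apply, mul_comm]

lemma inorm_nonneg {d : ℕ} (m : IVec d) : 0 ≤ inorm m := Real.sqrt_nonneg _

lemma inorm_sq {d : ℕ} (m : IVec d) : inorm m ^ 2 = (iprod m m : ℝ) := by
  rw [← norm_emb, ← inner_emb, real_inner_self_eq_norm_sq]

lemma one_le_inorm {d : ℕ} {m : IVec d} (hm : m ≠ 0) : 1 ≤ inorm m := by
  have h0 : iprod m m ≠ 0 := by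
    intro h
    exact hm (dotProduct_self_eq_zero.mp (show m ⬝ᵥ m = 0 from h))
  have h1 : (0 : ℝ) ≤ (iprod m m : ℝ) := by rw [← inorm_sq]; positivity
  have h2 : (1 : ℤ) ≤ iprod m m := by
    have : (0 : ℤ) ≤ iprod m m := by exact_mod_cast h1
    omega
  have h3 : (1 : ℝ) ≤ inorm m ^ 2 := by rw [inorm_sq]; exact_mod_cast h2
  nlinarith [inorm_nonneg m]

lemma inorm_zsmul {d : ℕ} (k : ℤ) (n : IVec d) : inorm (k • n) = |(k : ℝ)| * inorm n := by
  rw [← norm_emb, emb_zsmul, norm_smul, norm_emb, Real.norm_eq_abs]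

lemma inorm_add_le {d : ℕ} (m n : IVec d) : inorm (m + n) ≤ inorm m + inorm n := by
  rw [← norm_emb, emb_add, ← norm_emb, ← norm_emb]; exact norm_add_le _ _

lemma inorm_sum_le {d : ℕ} {ι : Type*} (s : Finset ι) (f : ι → IVec d) :
    inorm (∑ i ∈ s, f i) ≤ ∑ i ∈ s, inorm (f i) := by
  classical
  induction s using Finset.induction_on with
  | empty => simp [inorm]
  | insert a s ha ih =>
    rw [Finset.sum_insert ha, Finset.sum_insert ha]
    exact (inorm_add_le _ _).trans (by gcongr)

lemma exists_mulVec_bound {d : ℕ} (M : Mat d) :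
    ∃ C : ℝ, 1 ≤ C ∧ ∀ x, inorm (M.mulVec x) ≤ C * inorm x := by
  refine ⟨max 1 (eopNorm M), le_max_left _ _, fun x => ?_⟩
  have h : emb (M.mulVec x) =
      LinearMap.toContinuousLinearMap (Matrix.toEuclideanLin (rmat M)) (emb x) := by
    ext i
    simp [emb, rmat, Matrix.mulVec, dotProduct, Matrix.toEuclideanLin]
  rw [← norm_emb, ← norm_emb, h]
  refine (ContinuousLinearMap.le_opNorm _ _).trans ?_
  gcongr
  exact le_max_right _ _

lemma pow_mulVec_bound {d : ℕ} {M : Mat d} {C : ℝ} (hC : 0 ≤ C)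
    (h : ∀ x, inorm (M.mulVec x) ≤ C * inorm x) (n : ℕ) (x : IVec d) :
    inorm ((M ^ n).mulVec x) ≤ C ^ n * inorm x := by
  induction n generalizing x with
  | zero => simp
  | succ n ih =>
    rw [pow_succ, ← Matrix.mulVec_mulVec]
    calc _ ≤ C ^ n * inorm (M.mulVec x) := ih _
      _ ≤ C ^ n * (C * inorm x) := by gcongr; exact h x
      _ = _ := by ring

/-! ### Growth of powers of unipotent matrices -/

lemma unipotent_pow_bound {d S : ℕ} {M : Mat d} (hM : (M - 1) ^ S = 0) :
    ∃ K : ℝ, 1 ≤ K ∧ ∀ (n : ℕ) (x : IVec d),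
      inorm ((M ^ n).mulVec x) ≤ K * ((n : ℝ) + 1) ^ (S - 1) * inorm x := by
  obtain ⟨C, hC1, hC⟩ := exists_mulVec_bound (M - 1)
  have hCS : 0 ≤ (S : ℝ) * C ^ S := by positivity
  refine ⟨1 + S * C ^ S, by linarith, fun n x => ?_⟩
  have hexp : M ^ n = ∑ i ∈ Finset.range S, (n.choose i) • (M - 1) ^ i := by
    have h1 : M ^ n = ∑ i ∈ Finset.range (n + 1), (n.choose i) • (M - 1) ^ i := by
      conv_lhs => rw [show M = (M - 1) + 1 by abel]
      rw [(Commute.one_right (M - 1)).add_pow]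
      refine Finset.sum_congr rfl fun i _ => ?_
      rw [one_pow, mul_one, nsmul_eq_mul, (Nat.cast_commute _ _).eq]
    have h2 : ∀ N, n + 1 ≤ N → M ^ n = ∑ i ∈ Finset.range N, (n.choose i) • (M - 1) ^ i := by
      intro N hN
      rw [h1]
      refine Finset.sum_subset (Finset.range_mono hN) fun i _ hi => ?_
      rw [Nat.choose_eq_zero_of_lt (by simpa using hi), zero_smul]
    rw [h2 (max (n + 1) S) (le_max_left _ _)]
    symm
    refine Finset.sum_subset (Finset.range_mono (le_max_right _ _)) fun i _ hi => ?_
    rw [pow_eq_zero_of_le (by simpa using hi) hM, smul_zero]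
  rw [hexp, Matrix.sum_mulVec]
  refine (inorm_sum_le _ _).trans ?_
  have hx := inorm_nonneg x
  have hterm : ∀ i ∈ Finset.range S, inorm (((n.choose i) • (M - 1) ^ i).mulVec x) ≤
      C ^ S * ((n : ℝ) + 1) ^ (S - 1) * inorm x := by
    intro i hi
    have hi' : i < S := by simpa using hi
    have e : ((n.choose i) • (M - 1) ^ i).mulVec x =
        ((n.choose i : ℕ) : ℤ) • ((M - 1) ^ i).mulVec x := by
      rw [← Matrix.smul_mulVec, natCast_zsmul]
    rw [e, inorm_zsmul]
    have h1 : |(((n.choose i : ℕ) : ℤ) : ℝ)| ≤ ((n : ℝ) + 1) ^ (S - 1) := by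
      rw [Int.cast_natCast, abs_of_nonneg (Nat.cast_nonneg _)]
      calc ((n.choose i : ℕ) : ℝ) ≤ (n : ℝ) ^ i := by exact_mod_cast Nat.choose_le_pow n i
        _ ≤ ((n : ℝ) + 1) ^ i := by gcongr; linarith
        _ ≤ _ := by
          apply pow_le_pow_right₀
          · linarith [Nat.cast_nonneg (α := ℝ) n]
          · omega
    have h2 : inorm (((M - 1) ^ i).mulVec x) ≤ C ^ S * inorm x :=
      (pow_mulVec_bound (by linarith) hC i x).trans (by gcongr)
    calc _ ≤ ((n : ℝ) + 1) ^ (S - 1) * (C ^ S * inorm x) := by gcongr; exact inorm_nonneg _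
      _ = _ := by ring
  refine (Finset.sum_le_sum hterm).trans ?_
  rw [Finset.sum_const, Finset.card_range, nsmul_eq_mul]
  have : 0 ≤ ((n : ℝ) + 1) ^ (S - 1) * inorm x := by positivity
  nlinarith

lemma unipotent_inv {d S : ℕ} {U : (Mat d)ˣ} (hU : ((U : Mat d) - 1) ^ S = 0) :
    (((U⁻¹ : (Mat d)ˣ) : Mat d) - 1) ^ S = 0 := by
  have e : ((U⁻¹ : (Mat d)ˣ) : Mat d) - 1 =
      (-((U⁻¹ : (Mat d)ˣ) : Mat d)) * ((U : Mat d) - 1) := by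
    rw [mul_sub, neg_mul, Units.inv_mul, mul_one]; abel
  have hc : Commute (-((U⁻¹ : (Mat d)ˣ) : Mat d)) ((U : Mat d) - 1) := by
    apply Commute.neg_left
    apply Commute.sub_right _ (Commute.one_right _)
    exact (Units.inv_mul U).trans (Units.mul_inv U).symm
  rw [e, hc.mul_pow, hU, mul_zero]

/-- Two-sided version: undoing `U ^ l` costs at most a factor polynomial in `|l|`. -/
lemma unit_zpow_bound {d S : ℕ} {U : (Mat d)ˣ} (hU : ((U : Mat d) - 1) ^ S = 0) :
    ∃ K : ℝ, 1 ≤ K ∧ ∀ (l : ℤ) (x : IVec d),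
      inorm x ≤ K * (|(l : ℝ)| + 1) ^ (S - 1) * inorm (((U ^ l : (Mat d)ˣ) : Mat d).mulVec x) := by
  have hinv := unipotent_inv hU
  obtain ⟨K₁, h1, hK₁⟩ := unipotent_pow_bound hU
  obtain ⟨K₂, h2, hK₂⟩ := unipotent_pow_bound hinv
  refine ⟨K₁ + K₂, by linarith, fun l x => ?_⟩
  set y := ((U ^ l : (Mat d)ˣ) : Mat d).mulVec x with hy
  have hx : x = ((U ^ (-l) : (Mat d)ˣ) : Mat d).mulVec y := by
    rw [hy, Matrix.mulVec_mulVec, ← Units.val_mul, ← zpow_add]; simp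
  have hy0 := inorm_nonneg y
  have key : inorm (((U ^ (-l) : (Mat d)ˣ) : Mat d).mulVec y) ≤
      (K₁ + K₂) * (|(l : ℝ)| + 1) ^ (S - 1) * inorm y := by
    have hp : 0 ≤ (|(l : ℝ)| + 1) ^ (S - 1) * inorm y := by positivity
    obtain ⟨n, rfl | rfl⟩ := Int.eq_nat_or_neg l
    · have := hK₂ n y
      rw [zpow_neg, zpow_natCast, ← inv_pow, Units.val_pow_eq_pow_val]
      rw [Int.cast_natCast, Nat.abs_cast] at hp ⊢
      nlinarith
    · have := hK₁ n y
      rw [neg_neg, zpow_natCast, Units.val_pow_eq_pow_val]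
      rw [Int.cast_neg, abs_neg, Int.cast_natCast, Nat.abs_cast] at hp ⊢
      nlinarith
  rwa [← hx] at key

lemma unit_zpow_fixed {d : ℕ} {U : (Mat d)ˣ} {y u : IVec d}
    (h1 : (U : Mat d).mulVec y = y + u) (h2 : (U : Mat d).mulVec u = u) (l : ℤ) :
    ((U ^ l : (Mat d)ˣ) : Mat d).mulVec y = y + l • u := by
  have inv : ∀ {a b : IVec d}, (U : Mat d).mulVec a = b →
      ((U⁻¹ : (Mat d)ˣ) : Mat d).mulVec b = a := by
    intro a b h
    rw [← h, Matrix.mulVec_mulVec, Units.inv_mul, Matrix.one_mulVec]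
  have h2' := inv h2
  have h1' : ((U⁻¹ : (Mat d)ˣ) : Mat d).mulVec y = y - u := by
    apply inv; rw [Matrix.mulVec_sub, h1, h2]; abel
  induction l using Int.induction_on with
  | zero => simp
  | succ i ih =>
    rw [add_comm, zpow_add, zpow_one, Units.val_mul, ← Matrix.mulVec_mulVec, ih,
      Matrix.mulVec_add, Matrix.mulVec_smul, h1, h2, add_smul, one_smul]; abel
  | pred i ih =>
    rw [sub_eq_neg_add, zpow_add, zpow_neg_one, Units.val_mul, ← Matrix.mulVec_mulVec, ih,
      Matrix.mulVec_add, Matrix.mulVec_smul, h1', h2', add_smul, neg_one_smul]; abel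

/-! ### Arithmetic progressions of vectors -/

/-- A line `w + l • u` moves away from the origin in at least one of its two directions,
namely the one in which `l * ⟪w, u⟫` is nonnegative. -/
lemma sign_choice {d : ℕ} (w u : IVec d) :
    (∀ l : ℤ, 0 ≤ l → |(l : ℝ)| * inorm u ≤ inorm (w + l • u) ∧ inorm w ≤ inorm (w + l • u)) ∨
    (∀ l : ℤ, l ≤ 0 →
      |(l : ℝ)| * inorm u ≤ inorm (w + l • u) ∧ inorm w ≤ inorm (w + l • u)) := by
  have key : ∀ l : ℤ, 0 ≤ l * iprod w u →
      |(l : ℝ)| * inorm u ≤ inorm (w + l • u) ∧ inorm w ≤ inorm (w + l • u) := by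
    intro l hl
    have hl' : (0 : ℝ) ≤ l * iprod w u := by exact_mod_cast hl
    have e : inorm (w + l • u) ^ 2 =
        inorm w ^ 2 + 2 * (l * iprod w u) + (|(l : ℝ)| * inorm u) ^ 2 := by
      simp only [← norm_emb, emb_add, emb_zsmul]
      rw [norm_add_sq_real, inner_smul_right, inner_emb, norm_smul, Real.norm_eq_abs]
    constructor
    · apply le_of_sq_le_sq _ (inorm_nonneg _)
      rw [e]; nlinarith [sq_nonneg (inorm w)]
    · apply le_of_sq_le_sq _ (inorm_nonneg _)
      rw [e]; nlinarith [sq_nonneg (|(l : ℝ)| * inorm u)]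
  rcases le_total 0 (iprod w u) with h | h
  · exact Or.inl fun l hl => key l (mul_nonneg hl h)
  · exact Or.inr fun l hl => key l (mul_nonneg_of_nonpos_of_nonpos hl h)

/-- The norms along an arithmetic progression of nonzero integer vectors grow at least like the
distance of the index to the index `κ` nearest to the foot of the perpendicular. -/
lemma progression_bound {d : ℕ} (x w : IVec d) (hw : w ≠ 0) (h : ∀ k : ℤ, x + k • w ≠ 0) :
    ∃ κ : ℤ, ∀ k : ℤ, 1 + |((k - κ : ℤ) : ℝ)| ≤ 3 * inorm (x + k • w) := by
  set t : ℝ := (iprod x w : ℝ) / inorm w ^ 2 with ht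
  have hw1 := one_le_inorm hw
  refine ⟨round (-t), fun k => ?_⟩
  have hp := one_le_inorm (h k)
  have h1 : |(iprod (x + k • w) w : ℝ)| ≤ inorm (x + k • w) * inorm w := by
    rw [← inner_emb, ← norm_emb, ← norm_emb]; exact abs_real_inner_le_norm _ _
  have h2 : (iprod (x + k • w) w : ℝ) = (k + t) * inorm w ^ 2 := by
    have : iprod (x + k • w) w = iprod x w + k * iprod w w := by
      change (x + k • w) ⬝ᵥ w = x ⬝ᵥ w + k * (w ⬝ᵥ w)
      rw [add_dotProduct, smul_dotProduct, smul_eq_mul]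
    rw [this, ht, add_mul, div_mul_cancel₀ _ (by positivity), inorm_sq]
    push_cast; ring
  rw [h2, abs_mul, abs_of_nonneg (by positivity : (0 : ℝ) ≤ inorm w ^ 2)] at h1
  have h3 : |(k : ℝ) + t| ≤ inorm (x + k • w) := by
    have : |(k : ℝ) + t| * inorm w ≤ inorm (x + k • w) := by
      have hpos : 0 < inorm w := by linarith
      nlinarith
    nlinarith [abs_nonneg ((k : ℝ) + t)]
  have h4 := abs_sub_round (-t)
  have h5 : |((k - round (-t) : ℤ) : ℝ)| ≤ |(k : ℝ) + t| + |-t - round (-t)| := by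
    rw [show ((k - round (-t) : ℤ) : ℝ) = ((k : ℝ) + t) + (-t - round (-t)) by push_cast; ring]
    exact abs_add_le _ _
  linarith

/-! ### Rejection from an integer vector -/

/-- `|v|²` times the orthogonal projection of `x` to the hyperplane `v^⊥`. The scaling keeps the
result an integer vector. -/
def rej {d : ℕ} (v x : IVec d) : IVec d := iprod v v • x - iprod x v • v

lemma rej_add {d : ℕ} (v x y : IVec d) : rej v (x + y) = rej v x + rej v y := by
  have : iprod (x + y) v = iprod x v + iprod y v := add_dotProduct x y v
  rw [rej, rej, rej, this, smul_add, add_smul]; abel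

lemma rej_zsmul {d : ℕ} (v x : IVec d) (k : ℤ) : rej v (k • x) = k • rej v x := by
  have : iprod (k • x) v = k * iprod x v := smul_dotProduct k x v
  rw [rej, rej, this, smul_sub, smul_smul, smul_smul, smul_smul, mul_comm k (iprod v v)]

lemma rej_self {d : ℕ} (v : IVec d) : rej v v = 0 := sub_self _

lemma inorm_rej_le {d : ℕ} (v x : IVec d) : inorm (rej v x) ≤ inorm v ^ 2 * inorm x := by
  apply le_of_sq_le_sq _ (mul_nonneg (sq_nonneg _) (inorm_nonneg _))
  have e : inorm (rej v x) ^ 2 =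
      (inorm v ^ 2 * inorm x) ^ 2 - inorm v ^ 2 * (iprod x v : ℝ) ^ 2 := by
    rw [← norm_emb, rej, sub_eq_add_neg, ← neg_smul, emb_add, emb_zsmul, emb_zsmul,
      norm_add_sq_real, inner_smul_left, inner_smul_right, inner_emb, norm_smul, norm_smul,
      norm_emb, norm_emb, mul_pow, mul_pow, Real.norm_eq_abs, Real.norm_eq_abs, sq_abs, sq_abs,
      ← inorm_sq]
    simp
    ring
  rw [e]; nlinarith [mul_nonneg (sq_nonneg (inorm v)) (sq_nonneg (iprod x v : ℝ))]

/-- If `m` is the lowest point of `m + ℤ • v` and `v = T m` with `T v = 0`, then `m` makes a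
definite angle with `v`: the bound `|v| ≤ C |m^⊥|` comes from `T m^⊥ = v`. -/
lemma inorm_le_rej {d : ℕ} {T : Mat d} {C : ℝ} (hT : ∀ x, inorm (T.mulVec x) ≤ C * inorm x)
    {m v : IVec d} (hv : T.mulVec m = v) (hv0 : T.mulVec v = 0) (hne : v ≠ 0)
    (hlow : ∀ k : ℤ, inorm m ≤ inorm (m + k • v)) :
    inorm v ^ 2 * inorm m ≤ (1 + C) * inorm (rej v m) := by
  have hv1 := one_le_inorm hne
  set q := inorm v ^ 2 with hq
  have hqv : q * inorm v ≤ C * inorm (rej v m) := by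
    have e : T.mulVec (rej v m) = iprod v v • v := by
      rw [rej, Matrix.mulVec_sub, Matrix.mulVec_smul, Matrix.mulVec_smul, hv, hv0]; simp
    have h := hT (rej v m)
    rwa [e, inorm_zsmul, ← inorm_sq, abs_of_nonneg (sq_nonneg _)] at h
  set t : ℝ := (iprod m v : ℝ) / q with ht
  set k : ℤ := round t with hk
  have h1 := hlow (-k)
  have e : iprod v v • (m + (-k) • v) = rej v m + (iprod m v - k * iprod v v) • v := by
    rw [rej, smul_add, sub_smul, smul_smul]
    have : iprod v v * -k = -(k * iprod v v) := by ring
    rw [this, neg_smul]; abel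
  have h2 : q * inorm (m + (-k) • v) ≤ inorm (rej v m) + q / 2 * inorm v := by
    have h3 := inorm_add_le (rej v m) ((iprod m v - k * iprod v v) • v)
    rw [← e, inorm_zsmul, inorm_zsmul, ← inorm_sq, abs_of_nonneg (sq_nonneg _)] at h3
    have h4 : |((iprod m v - k * iprod v v : ℤ) : ℝ)| ≤ q / 2 := by
      have h5 := abs_sub_round t
      have : ((iprod m v - k * iprod v v : ℤ) : ℝ) = q * (t - k) := by
        push_cast
        rw [← inorm_sq, ht, mul_sub, mul_div_cancel₀ _ (by positivity)]; ring
      rw [this, abs_mul, abs_of_nonneg (sq_nonneg _)]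
      nlinarith [sq_nonneg (inorm v)]
    nlinarith
  have h6 : q * inorm m ≤ q * inorm (m + (-k) • v) := by gcongr
  have hr := inorm_nonneg (rej v m)
  nlinarith [mul_nonneg (sq_nonneg (inorm v)) (inorm_nonneg v)]

/-! ### Growth of the orbit in one half-plane -/

lemma exists_last_nonzero {d S : ℕ} {N : Mat d} (hN : N ^ S = 0) {y : IVec d}
    (hy : N.mulVec y ≠ 0) :
    ∃ i, i < S ∧ (N ^ (i + 1)).mulVec y ≠ 0 ∧ (N ^ (i + 2)).mulVec y = 0 := by
  classical
  have hex : ∃ n, (N ^ n).mulVec y = 0 := ⟨S, by rw [hN, Matrix.zero_mulVec]⟩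
  have h2 : 2 ≤ Nat.find hex := by
    by_contra hlt
    have h := Nat.find_spec hex
    interval_cases hn : Nat.find hex
    · rw [pow_zero, Matrix.one_mulVec] at h
      exact hy (by rw [h, Matrix.mulVec_zero])
    · exact hy (by simpa using h)
  have hS : Nat.find hex ≤ S := Nat.find_min' hex (by rw [hN, Matrix.zero_mulVec])
  obtain ⟨i, hi⟩ := Nat.exists_eq_add_of_le' h2
  refine ⟨i, by omega, ?_, ?_⟩
  · exact Nat.find_min hex (by omega)
  · rw [← hi]; exact Nat.find_spec hex

/-- The two lower bounds satisfied by the norm `p` of a point `Ā^k B̄^l m`: polynomial in `|m|`,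
and linear in `l` up to a loss of `|m|²`. -/
def Good {d : ℕ} (S : ℕ) (C : ℝ) (m : IVec d) (l : ℤ) (p : ℝ) : Prop :=
  inorm m ≤ C * p ^ S ∧ |(l : ℝ)| + 1 ≤ C * inorm m ^ 2 * p

lemma Good.mono {d S : ℕ} {C C' : ℝ} {m : IVec d} {l : ℤ} {p : ℝ} (h : Good S C m l p)
    (hC : C ≤ C') (hp : 0 ≤ p) : Good S C' m l p :=
  ⟨h.1.trans (by gcongr), h.2.trans (by gcongr)⟩

section
variable {d S : ℕ} {a b : (Mat d)ˣ}

/-- `a^k b^l m = b^l (m + k • v)` when `a` is unipotent of step two and `v = (a - 1) m`. -/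
lemma orbit_eq (hab : Commute a b) (hA : ((a : Mat d) - 1) ^ 2 = 0) (m : IVec d) (k l : ℤ) :
    ((a ^ k * b ^ l : (Mat d)ˣ) : Mat d).mulVec m =
      ((b ^ l : (Mat d)ˣ) : Mat d).mulVec (m + k • ((a : Mat d) - 1).mulVec m) := by
  have h1 : (a : Mat d).mulVec m = m + ((a : Mat d) - 1).mulVec m := by
    rw [Matrix.sub_mulVec, Matrix.one_mulVec]; abel
  have h2 : (a : Mat d).mulVec (((a : Mat d) - 1).mulVec m) = ((a : Mat d) - 1).mulVec m := by
    have : ((a : Mat d) - 1).mulVec (((a : Mat d) - 1).mulVec m) = 0 := by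
      rw [Matrix.mulVec_mulVec, ← sq, hA, Matrix.zero_mulVec]
    rwa [Matrix.sub_mulVec, Matrix.one_mulVec, sub_eq_zero] at this
  rw [(hab.zpow_zpow k l).eq, Units.val_mul, ← Matrix.mulVec_mulVec, unit_zpow_fixed h1 h2]

lemma commute_zpow_sub_one (l : ℤ) : Commute ((b ^ l : (Mat d)ˣ) : Mat d) ((b : Mat d) - 1) := by
  apply Commute.sub_right _ (Commute.one_right _)
  have : b ^ l * b = b * b ^ l := (Commute.self_zpow b l).symm.eq
  exact Commute.units_val this

/-- If some bounded matrix maps the orbit point `x_{k,l}` to `y + l • u` independently of `k`,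
with `u ≠ 0`, then the orbit grows linearly on the half-plane singled out by `sign_choice`. -/
lemma good_of_linear {C K : ℝ} (hS : S ≠ 0) {N : Mat d} (hC : 1 ≤ C)
    (hN : ∀ x, inorm (N.mulVec x) ≤ C * inorm x) (hK : 1 ≤ K)
    (hb : ∀ (l : ℤ) (x : IVec d),
      inorm x ≤ K * (|(l : ℝ)| + 1) ^ (S - 1) * inorm (((b ^ l : (Mat d)ˣ) : Mat d).mulVec x))
    {m v y u : IVec d} (hm : m ≠ 0) (hu : u ≠ 0)
    (hlow : ∀ k : ℤ, inorm m ≤ inorm (m + k • v))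
    (hyu : ∀ k l : ℤ,
      N.mulVec (((b ^ l : (Mat d)ˣ) : Mat d).mulVec (m + k • v)) = y + l • u)
    (hp1 : ∀ k l : ℤ, 1 ≤ inorm (((b ^ l : (Mat d)ˣ) : Mat d).mulVec (m + k • v))) :
    (∀ l : ℤ, 0 ≤ l → ∀ k : ℤ, Good S (K * (C + 1) ^ S) m l
      (inorm (((b ^ l : (Mat d)ˣ) : Mat d).mulVec (m + k • v)))) ∨
    (∀ l : ℤ, l ≤ 0 → ∀ k : ℤ, Good S (K * (C + 1) ^ S) m l
      (inorm (((b ^ l : (Mat d)ˣ) : Mat d).mulVec (m + k • v)))) := by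
  have hm1 := one_le_inorm hm
  have hu1 := one_le_inorm hu
  have key : ∀ l : ℤ, |(l : ℝ)| * inorm u ≤ inorm (y + l • u) → ∀ k : ℤ,
      Good S (K * (C + 1) ^ S) m l
        (inorm (((b ^ l : (Mat d)ˣ) : Mat d).mulVec (m + k • v))) := by
    intro l hl k
    have hp := hp1 k l
    have hbl := hb l (m + k • v)
    have hNl := hN (((b ^ l : (Mat d)ˣ) : Mat d).mulVec (m + k • v))
    rw [hyu] at hNl
    set p := inorm (((b ^ l : (Mat d)ˣ) : Mat d).mulVec (m + k • v))
    have hlin : |(l : ℝ)| + 1 ≤ (C + 1) * p := by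
      nlinarith [abs_nonneg (l : ℝ)]
    have hC1 : C + 1 ≤ (C + 1) ^ S := le_self_pow₀ (by linarith) hS
    constructor
    · calc inorm m ≤ inorm (m + k • v) := hlow k
        _ ≤ K * (|(l : ℝ)| + 1) ^ (S - 1) * p := hbl
        _ ≤ K * ((C + 1) * p) ^ (S - 1) * p := by gcongr
        _ = K * (C + 1) ^ (S - 1) * p ^ S := by
          rw [mul_pow]
          conv_rhs => rw [← Nat.sub_one_add_one hS, pow_succ p]
          simp only [Nat.add_sub_cancel]; ring
        _ ≤ K * (C + 1) ^ S * p ^ S := by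
          gcongr
          · linarith
          · exact Nat.sub_le _ _
    · have h1 : 1 ≤ inorm m ^ 2 := one_le_pow₀ hm1
      have h2 : C + 1 ≤ K * (C + 1) ^ S := by nlinarith
      have h3 : (C + 1) * 1 ≤ K * (C + 1) ^ S * inorm m ^ 2 := by gcongr
      calc _ ≤ (C + 1) * p := hlin
        _ ≤ _ := by gcongr; linarith
  rcases sign_choice y u with h | h
  · exact Or.inl fun l hl => key l (h l hl).1
  · exact Or.inr fun l hl => key l (h l hl).1

/-- If `B̂ m` is fixed and is not parallel to the fixed vector `v`, the rejection from `v` of the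
orbit point is an affine function of `l` alone. Being lowest bounds its constant term below. -/
lemma good_of_planar {C : ℝ} (hS : S ≠ 0) {T : Mat d} (hC : 1 ≤ C)
    (hT : ∀ x, inorm (T.mulVec x) ≤ C * inorm x)
    {m v w : IVec d} (hm : m ≠ 0) (hv : T.mulVec m = v) (hv0 : T.mulVec v = 0) (hne : v ≠ 0)
    (hlow : ∀ k : ℤ, inorm m ≤ inorm (m + k • v)) (hw : rej v w ≠ 0)
    (horb : ∀ k l : ℤ,
      ((b ^ l : (Mat d)ˣ) : Mat d).mulVec (m + k • v) = m + l • w + k • v)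
    (hp1 : ∀ k l : ℤ, 1 ≤ inorm (((b ^ l : (Mat d)ˣ) : Mat d).mulVec (m + k • v))) :
    (∀ l : ℤ, 0 ≤ l → ∀ k : ℤ, Good S (1 + C ^ 2 + C) m l
      (inorm (((b ^ l : (Mat d)ˣ) : Mat d).mulVec (m + k • v)))) ∨
    (∀ l : ℤ, l ≤ 0 → ∀ k : ℤ, Good S (1 + C ^ 2 + C) m l
      (inorm (((b ^ l : (Mat d)ˣ) : Mat d).mulVec (m + k • v)))) := by
  have hm1 := one_le_inorm hm
  have hv1 := one_le_inorm hne
  have hw1 := one_le_inorm hw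
  have hrej := inorm_le_rej hT hv hv0 hne hlow
  have hvm : inorm v ≤ C * inorm m := by rw [← hv]; exact hT m
  have key : ∀ l : ℤ, (|(l : ℝ)| * inorm (rej v w) ≤ inorm (rej v m + l • rej v w) ∧
      inorm (rej v m) ≤ inorm (rej v m + l • rej v w)) → ∀ k : ℤ,
      Good S (1 + C ^ 2 + C) m l
        (inorm (((b ^ l : (Mat d)ˣ) : Mat d).mulVec (m + k • v))) := by
    intro l hl k
    have hp := hp1 k l
    have hle := inorm_rej_le v (((b ^ l : (Mat d)ˣ) : Mat d).mulVec (m + k • v))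
    have e : rej v (((b ^ l : (Mat d)ˣ) : Mat d).mulVec (m + k • v)) =
        rej v m + l • rej v w := by
      rw [horb, rej_add, rej_add, rej_zsmul, rej_zsmul, rej_self, smul_zero, add_zero]
    rw [e] at hle
    set p := inorm (((b ^ l : (Mat d)ˣ) : Mat d).mulVec (m + k • v))
    obtain ⟨hl1, hl2⟩ := hl
    constructor
    · have h1 : inorm v ^ 2 * inorm m ≤ inorm v ^ 2 * ((1 + C) * p) := by
        calc _ ≤ (1 + C) * inorm (rej v m) := hrej
          _ ≤ (1 + C) * (inorm v ^ 2 * p) := by gcongr; linarith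
          _ = _ := by ring
      have h2 : inorm m ≤ (1 + C) * p := le_of_mul_le_mul_left h1 (by positivity)
      calc _ ≤ (1 + C) * p := h2
        _ ≤ (1 + C ^ 2 + C) * p ^ S := by
          gcongr
          · nlinarith
          · exact le_self_pow₀ hp hS
    · have h1 : |(l : ℝ)| ≤ inorm v ^ 2 * p := by
        nlinarith [abs_nonneg (l : ℝ)]
      have h2 : inorm v ^ 2 ≤ C ^ 2 * inorm m ^ 2 := by
        rw [← mul_pow]; gcongr
      have h3 : 1 ≤ inorm m ^ 2 * p := by
        have : 1 ≤ inorm m ^ 2 := one_le_pow₀ hm1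
        nlinarith
      have h4 : inorm v ^ 2 * p ≤ C ^ 2 * inorm m ^ 2 * p := by gcongr
      nlinarith
  rcases sign_choice (rej v m) (rej v w) with h | h
  · exact Or.inl fun l hl => key l (h l hl)
  · exact Or.inr fun l hl => key l (h l hl)

/-- Growth of the orbit of a non-resonant lowest vector on one of the two half-planes. -/
lemma exists_good (hab : Commute a b) (hA : ((a : Mat d) - 1) ^ 2 = 0)
    (hB : ((b : Mat d) - 1) ^ S = 0) :
    ∃ C : ℝ, 1 ≤ C ∧ ∀ m : IVec d, m ≠ 0 →
      (∀ k l : ℤ, ¬(k = 0 ∧ l = 0) → ((a ^ k * b ^ l : (Mat d)ˣ) : Mat d).mulVec m ≠ m) →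
      (∀ k : ℤ, inorm m ≤ inorm (m + k • ((a : Mat d) - 1).mulVec m)) →
      (∀ l : ℤ, 0 ≤ l → ∀ k : ℤ, Good S C m l
        (inorm (((a ^ k * b ^ l : (Mat d)ˣ) : Mat d).mulVec m))) ∨
      (∀ l : ℤ, l ≤ 0 → ∀ k : ℤ, Good S C m l
        (inorm (((a ^ k * b ^ l : (Mat d)ˣ) : Mat d).mulVec m))) := by
  obtain ⟨CA, hCA1, hCA⟩ := exists_mulVec_bound ((a : Mat d) - 1)
  obtain ⟨CB, hCB1, hCB⟩ := exists_mulVec_bound ((b : Mat d) - 1)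
  obtain ⟨K, hK1, hK⟩ := unit_zpow_bound hB
  have hCBS : 1 ≤ CB ^ S := one_le_pow₀ hCB1
  have hC1 : 1 ≤ CB ^ S * CA := by nlinarith
  have hKC : 1 ≤ K * (CB ^ S * CA + 1) ^ S := by
    have := one_le_pow₀ (n := S) (show 1 ≤ CB ^ S * CA + 1 by linarith)
    nlinarith
  have hP : 1 ≤ 1 + CA ^ 2 + CA := by nlinarith
  refine ⟨K * (CB ^ S * CA + 1) ^ S + (1 + CA ^ 2 + CA), by linarith, fun m hm hnr hlow => ?_⟩
  have hS : S ≠ 0 := by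
    rintro rfl
    rw [pow_zero] at hB
    exact hm (by rw [← Matrix.one_mulVec m, hB, Matrix.zero_mulVec])
  set X := (a : Mat d) - 1 with hX
  set Y := (b : Mat d) - 1 with hY
  set v := X.mulVec m with hv
  have hXY : Commute X Y := by
    have : Commute (a : Mat d) (b : Mat d) := hab.units_val
    exact (this.sub_right (Commute.one_right _)).sub_left (Commute.one_left _)
  have hb : ∀ x, (b : Mat d).mulVec x = x + Y.mulVec x := by
    intro x; rw [hY, Matrix.sub_mulVec, Matrix.one_mulVec]; abel
  have hXv : X.mulVec v = 0 := by rw [hv, Matrix.mulVec_mulVec, ← sq, hA, Matrix.zero_mulVec]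
  have hv0 : v ≠ 0 := by
    intro h
    refine hnr 1 0 (by simp) ?_
    rw [orbit_eq hab hA, ← hX, ← hv, h]; simp
  have hp1 : ∀ k l : ℤ, 1 ≤ inorm (((b ^ l : (Mat d)ˣ) : Mat d).mulVec (m + k • v)) := by
    intro k l
    apply one_le_inorm
    rw [hv, hX, ← orbit_eq hab hA]
    intro h
    apply hm
    rw [← Matrix.one_mulVec m, ← Units.val_one, ← inv_mul_cancel (a ^ k * b ^ l), Units.val_mul,
      ← Matrix.mulVec_mulVec, h, Matrix.mulVec_zero]
  -- `N` kills `v`, so the image of the orbit is `b^l (N m)`, and this is affine in `l` since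
  -- `N m` has step exactly two under `b`.
  have lin : ∀ N : Mat d, (∀ x, inorm (N.mulVec x) ≤ CB ^ S * CA * inorm x) → Commute Y N →
      (∀ l : ℤ, Commute ((b ^ l : (Mat d)ˣ) : Mat d) N) → N.mulVec v = 0 →
      Y.mulVec (N.mulVec m) ≠ 0 → Y.mulVec (Y.mulVec (N.mulVec m)) = 0 →
      (∀ l : ℤ, 0 ≤ l → ∀ k : ℤ, Good S (K * (CB ^ S * CA + 1) ^ S) m l
        (inorm (((b ^ l : (Mat d)ˣ) : Mat d).mulVec (m + k • v)))) ∨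
      (∀ l : ℤ, l ≤ 0 → ∀ k : ℤ, Good S (K * (CB ^ S * CA + 1) ^ S) m l
        (inorm (((b ^ l : (Mat d)ˣ) : Mat d).mulVec (m + k • v)))) := by
    intro N hN hYN hbN hNv h1 h2
    refine good_of_linear hS hC1 hN hK1 hK (y := N.mulVec m) (u := Y.mulVec (N.mulVec m))
      hm h1 hlow (fun k l => ?_) hp1
    rw [Matrix.mulVec_mulVec, ← (hbN l).eq, ← Matrix.mulVec_mulVec, Matrix.mulVec_add,
      Matrix.mulVec_smul, hNv, smul_zero, add_zero]
    exact unit_zpow_fixed (hb _) (by rw [hb, h2, add_zero]) l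
  have hYb : ∀ (i : ℕ) (l : ℤ), Commute ((b ^ l : (Mat d)ˣ) : Mat d) (Y ^ i) := fun i l =>
    (commute_zpow_sub_one l).pow_right i
  have hXb : ∀ l : ℤ, Commute ((b ^ l : (Mat d)ˣ) : Mat d) X := by
    intro l
    apply Commute.sub_right _ (Commute.one_right _)
    exact (hab.zpow_right l).symm.units_val
  have hYbd : ∀ i < S, ∀ x, inorm ((Y ^ i).mulVec x) ≤ CB ^ S * inorm x := by
    intro i hi x
    refine (pow_mulVec_bound (by linarith) hCB i x).trans ?_
    have := inorm_nonneg x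
    gcongr
  have main : ∃ C' ≤ K * (CB ^ S * CA + 1) ^ S + (1 + CA ^ 2 + CA),
      (∀ l : ℤ, 0 ≤ l → ∀ k : ℤ, Good S C' m l
        (inorm (((b ^ l : (Mat d)ˣ) : Mat d).mulVec (m + k • v)))) ∨
      (∀ l : ℤ, l ≤ 0 → ∀ k : ℤ, Good S C' m l
        (inorm (((b ^ l : (Mat d)ˣ) : Mat d).mulVec (m + k • v)))) := by
    by_cases hYv : Y.mulVec v = 0
    · by_cases hYYm : Y.mulVec (Y.mulVec m) = 0
      · refine ⟨_, by linarith, good_of_planar hS hCA1 hCA (w := Y.mulVec m) hm hv.symm hXv hv0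
          hlow ?_ (fun k l => ?_) hp1⟩
        · -- A relation `q • Y m = p • v` with `q = ⟪v, v⟫ > 0` would be a resonance.
          intro h
          rw [rej, sub_eq_zero] at h
          refine hnr (-iprod (Y.mulVec m) v) (iprod v v) ?_ ?_
          · rintro ⟨-, hq⟩
            exact hv0 (dotProduct_self_eq_zero.mp (show v ⬝ᵥ v = 0 from hq))
          · rw [orbit_eq hab hA, ← hX, ← hv, Matrix.mulVec_add, Matrix.mulVec_smul,
              unit_zpow_fixed (hb m) (by rw [hb, hYYm, add_zero]),
              unit_zpow_fixed (u := 0) (by rw [hb, hYv]) (Matrix.mulVec_zero _), h]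
            simp
        · rw [Matrix.mulVec_add, Matrix.mulVec_smul,
            unit_zpow_fixed (hb m) (by rw [hb, hYYm, add_zero]),
            unit_zpow_fixed (u := 0) (by rw [hb, hYv]) (Matrix.mulVec_zero _)]
          simp
      · -- Here `N = Y^(i+1)`, which kills `v`.
        obtain ⟨i, hi, h1, h2⟩ := exists_last_nonzero hB hYYm
        have hi' : i + 1 < S := by
          by_contra hge
          apply h1
          rw [pow_eq_zero_of_le (by omega) hB, Matrix.zero_mulVec]
        have e : ∀ j, (Y ^ j).mulVec (Y.mulVec m) = (Y ^ (j + 1)).mulVec m := by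
          intro j; rw [Matrix.mulVec_mulVec, ← pow_succ]
        have e' : ∀ j, Y.mulVec ((Y ^ j).mulVec m) = (Y ^ (j + 1)).mulVec m := by
          intro j; rw [Matrix.mulVec_mulVec, ← pow_succ']
        refine ⟨_, by linarith, lin (Y ^ (i + 1)) (fun x => ?_) (Commute.self_pow _ _)
          (hYb _) ?_ ?_ ?_⟩
        · have h3 := hYbd (i + 1) hi' x
          have h4 := inorm_nonneg x
          have h5 : CB ^ S * inorm x * 1 ≤ CB ^ S * inorm x * CA := by gcongr
          linarith
        · rw [pow_succ, ← Matrix.mulVec_mulVec, hYv, Matrix.mulVec_zero]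
        · rw [e']; rwa [e] at h1
        · rw [e', e']; rwa [e] at h2
    · -- Here `N = Y^i * X`, which kills `v` since `X v = 0`.
      obtain ⟨i, hi, h1, h2⟩ := exists_last_nonzero hB hYv
      have e' : ∀ j, Y.mulVec ((Y ^ j).mulVec v) = (Y ^ (j + 1)).mulVec v := by
        intro j; rw [Matrix.mulVec_mulVec, ← pow_succ']
      have eN : (Y ^ i * X).mulVec m = (Y ^ i).mulVec v := by rw [hv, Matrix.mulVec_mulVec]
      refine ⟨_, by linarith, lin (Y ^ i * X) (fun x => ?_)
        ((Commute.self_pow _ _).mul_right hXY.symm) (fun l => (hYb i l).mul_right (hXb l)) ?_ ?_ ?_⟩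
      · rw [← Matrix.mulVec_mulVec, mul_assoc]
        refine (hYbd i hi _).trans ?_
        gcongr
        exact hCA x
      · rw [← Matrix.mulVec_mulVec, hXv, Matrix.mulVec_zero]
      · rwa [eN, e']
      · rwa [eN, e', e']
  obtain ⟨C', hC', h⟩ := main
  simp only [orbit_eq hab hA]
  exact h.imp (fun h l hl k => (h l hl k).mono hC' (inorm_nonneg _))
    (fun h l hl k => (h l hl k).mono hC' (inorm_nonneg _))

/-- For fixed `l`, the norms of the orbit points `a^k b^l m` grow linearly in `|k - κ|`. -/
lemma exists_center (hab : Commute a b) (hA : ((a : Mat d) - 1) ^ 2 = 0) {m : IVec d}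
    (hm : m ≠ 0) (hv : ((a : Mat d) - 1).mulVec m ≠ 0) (l : ℤ) :
    ∃ κ : ℤ, ∀ k : ℤ, 1 + |((k - κ : ℤ) : ℝ)| ≤
      3 * inorm (((a ^ k * b ^ l : (Mat d)ˣ) : Mat d).mulVec m) := by
  have inj : ∀ (U : (Mat d)ˣ) {x : IVec d}, x ≠ 0 → (U : Mat d).mulVec x ≠ 0 := by
    intro U x hx h
    apply hx
    rw [← Matrix.one_mulVec x, ← Units.val_one, ← inv_mul_cancel U, Units.val_mul,
      ← Matrix.mulVec_mulVec, h, Matrix.mulVec_zero]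
  have e : ∀ k : ℤ, ((a ^ k * b ^ l : (Mat d)ˣ) : Mat d).mulVec m =
      ((b ^ l : (Mat d)ˣ) : Mat d).mulVec m +
        k • ((b ^ l : (Mat d)ˣ) : Mat d).mulVec (((a : Mat d) - 1).mulVec m) := by
    intro k; rw [orbit_eq hab hA, Matrix.mulVec_add, Matrix.mulVec_smul]
  simp only [e]
  refine progression_bound _ _ (inj _ hv) fun k => ?_
  rw [← e]
  exact inj _ hm

end

/-! ### Summation -/

/-- Splitting `p ^ (-r)` into `p ^ (-(r - 4))`, which yields the power of `μ`, and two factors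
`p ^ (-2)`, which make the sums over `l` and `k` converge. -/
lemma term_bound {S : ℕ} (hS : S ≠ 0) {r C μ p x y : ℝ} (hr : 8 * S < 0.99 * r) (hC : 1 ≤ C)
    (hμ : 1 ≤ μ) (hp : 0 < p) (h1 : μ ≤ C * p ^ S) (hx : 0 < x) (h2 : x ≤ C * μ ^ 2 * p)
    (hy : 0 < y) (h3 : y ≤ 3 * p) :
    p ^ (-r) ≤ (C ^ ((r - 4) / S) * C ^ 2 * 9 * μ ^ (-(0.99 / (S : ℝ)) * r + 8)) *
      (x ^ 2)⁻¹ * (y ^ 2)⁻¹ := by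
  have hS1 : (1 : ℝ) ≤ S := by exact_mod_cast Nat.one_le_iff_ne_zero.mpr hS
  have hS0 : (S : ℝ) ≠ 0 := by positivity
  have e1 : p ^ (-r) = p ^ (-(r - 4)) * (p ^ 2)⁻¹ * (p ^ 2)⁻¹ := by
    rw [← Real.rpow_natCast, ← Real.rpow_neg hp.le, ← Real.rpow_add hp, ← Real.rpow_add hp]
    congr 1; push_cast; ring
  have b1 : p ^ (-(r - 4)) ≤ C ^ ((r - 4) / S) * μ ^ (-((r - 4) / S)) := by
    have h : μ / C ≤ p ^ S := by rw [div_le_iff₀ (by linarith)]; linarith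
    have hneg : -((r - 4) / S) ≤ 0 := by
      rw [neg_nonpos]; apply div_nonneg <;> linarith
    have := Real.rpow_le_rpow_of_nonpos (by positivity) h hneg
    rw [← Real.rpow_natCast, ← Real.rpow_mul hp.le, Real.div_rpow (by linarith) (by linarith),
      Real.rpow_neg (by linarith : 0 ≤ C), div_inv_eq_mul] at this
    rw [show (S : ℝ) * -((r - 4) / S) = -(r - 4) by field_simp] at this
    linarith
  have b2 : (p ^ 2)⁻¹ ≤ C ^ 2 * μ ^ 4 * (x ^ 2)⁻¹ := by
    rw [← div_eq_mul_inv, le_div_iff₀ (by positivity), inv_mul_le_iff₀ (by positivity)]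
    calc x ^ 2 ≤ (C * μ ^ 2 * p) ^ 2 := by gcongr
      _ = _ := by ring
  have b3 : (p ^ 2)⁻¹ ≤ 9 * (y ^ 2)⁻¹ := by
    rw [← div_eq_mul_inv, le_div_iff₀ (by positivity), inv_mul_le_iff₀ (by positivity)]
    calc y ^ 2 ≤ (3 * p) ^ 2 := by gcongr
      _ = _ := by ring
  have b4 : μ ^ (-((r - 4) / S)) * μ ^ 4 ≤ μ ^ (-(0.99 / (S : ℝ)) * r + 8) := by
    rw [← Real.rpow_natCast, ← Real.rpow_add (by linarith)]
    apply Real.rpow_le_rpow_of_exponent_le hμ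
    rw [← sub_nonneg]
    have : -(0.99 / (S : ℝ)) * r + 8 - (-((r - 4) / S) + ((4 : ℕ) : ℝ)) =
        (0.01 * r + 4 * (S - 1)) / S := by
      push_cast; field_simp; ring
    rw [this]
    apply div_nonneg <;> linarith
  rw [e1]
  calc _ ≤ (C ^ ((r - 4) / S) * μ ^ (-((r - 4) / S))) * (C ^ 2 * μ ^ 4 * (x ^ 2)⁻¹) *
        (9 * (y ^ 2)⁻¹) := by gcongr
    _ = (C ^ ((r - 4) / S) * C ^ 2 * 9 * (μ ^ (-((r - 4) / S)) * μ ^ 4)) *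
        (x ^ 2)⁻¹ * (y ^ 2)⁻¹ := by ring
    _ ≤ _ := by gcongr

lemma summable_nat_sq : Summable fun j : ℕ => (((j : ℝ) + 1) ^ 2)⁻¹ := by
  have := (summable_nat_add_iff 1).mpr (Real.summable_nat_pow_inv.mpr (one_lt_two))
  simpa using this

lemma summable_int_sq : Summable fun n : ℤ => ((1 + |(n : ℝ)|) ^ 2)⁻¹ := by
  apply Summable.of_nat_of_neg
  · simpa [add_comm] using summable_nat_sq
  · simpa [add_comm] using summable_nat_sq

/-- A double series whose terms are dominated by `D (j+1)⁻² (1+|k-κ_j|)⁻²` is at most a universal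
multiple of `D`, whatever the shifts `κ_j`. -/
lemma double_tsum_le {D : ℝ} (hD : 0 ≤ D) {F : ℤ → ℕ → ℝ} (κ : ℕ → ℤ)
    (h : ∀ k j, F k j ≤ D * (((j : ℝ) + 1) ^ 2)⁻¹ * ((1 + |((k - κ j : ℤ) : ℝ)|) ^ 2)⁻¹) :
    ∑' (k : ℤ) (j : ℕ), ENNReal.ofReal (F k j) ≤
      ENNReal.ofReal (D * (∑' j : ℕ, (((j : ℝ) + 1) ^ 2)⁻¹) *
        ∑' n : ℤ, ((1 + |(n : ℝ)|) ^ 2)⁻¹) := by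
  have h1 : 0 ≤ ∑' j : ℕ, (((j : ℝ) + 1) ^ 2)⁻¹ := tsum_nonneg fun _ => by positivity
  rw [ENNReal.tsum_comm, ENNReal.ofReal_mul (mul_nonneg hD h1), ENNReal.ofReal_mul hD,
    ENNReal.ofReal_tsum_of_nonneg (fun _ => by positivity) summable_nat_sq,
    ENNReal.ofReal_tsum_of_nonneg (fun _ => by positivity) summable_int_sq,
    mul_assoc, ← ENNReal.tsum_mul_right, ← ENNReal.tsum_mul_left]
  refine ENNReal.tsum_le_tsum fun j => ?_
  rw [← (Equiv.subRight (κ j)).tsum_eq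
    (fun n : ℤ => ENNReal.ofReal ((1 + |(n : ℝ)|) ^ 2)⁻¹), ← mul_assoc, ← ENNReal.tsum_mul_left]
  refine ENNReal.tsum_le_tsum fun k => ?_
  rw [← ENNReal.ofReal_mul hD, ← ENNReal.ofReal_mul (by positivity)]
  exact ENNReal.ofReal_le_ofReal (h k j)

/-! ### The dual action as a group of units -/

lemma zpowM_eq {d : ℕ} (M : Mat d) (k : ℤ) : zpowM M k = M ^ k := by
  cases k <;> rfl

/-- The dual of a unipotent matrix is a unit, and its difference with `1` is annihilated by the
same power. -/
lemma exists_unit_dual {d S : ℕ} {M : Mat d} (hM : (M - 1) ^ S = 0) :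
    ∃ U : (Mat d)ˣ, (U : Mat d) = dual M ∧ ((U : Mat d) - 1) ^ S = 0 ∧
      ((U⁻¹ : (Mat d)ˣ) : Mat d) = M.transpose := by
  have hT : (M.transpose - 1) ^ S = 0 := by
    rw [← Matrix.transpose_one, ← Matrix.transpose_sub, ← Matrix.transpose_pow, hM,
      Matrix.transpose_zero]
  have hu : IsUnit M.transpose := by
    have := IsNilpotent.isUnit_add_one ⟨S, hT⟩
    simpa using this
  obtain ⟨V, hV⟩ := hu
  refine ⟨V⁻¹, by rw [dual, ← hV, Matrix.coe_units_inv], ?_, by rw [inv_inv, hV]⟩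
  apply unipotent_inv
  rw [hV, hT]

/-- **Proposition (estimate of the double sums; parabolic higher rank trick).** Let
`⟨a,b⟩` be an unlocked parabolic affine action of step `S` with `a` step-2, and set
`η = 0.99/S`. For `r` sufficiently large (`r > 8/η`) there is `c = c(r,A,B) > 0` such
that for any `m ∈ 𝒞₃` which is the lowest point on its `Ā`-orbit, at least one of
`∑_{k∈ℤ} ∑_{l≥0} |Ā^k B̄^l m|^{-r} ≤ c |m|^{-ηr+8}` and
`∑_{k∈ℤ} ∑_{l<0} |Ā^k B̄^l m|^{-r} ≤ c |m|^{-ηr+8}` holds. -/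
theorem double_sum_bound (d S : ℕ) (A B : Mat d) (α β : Vec d)
    (hApar : IsParabolic A) (hA2 : IsStep2 A) (hBS : (B - 1) ^ S = 0)
    (hcomm : A * B = B * A) (hTAB : TAB A B α β)
    (hunlocked : ¬ IsLocked A B)
    (r : ℝ) (hr : 8 / (0.99 / (S : ℝ)) < r) :
    ∃ c : ℝ, 0 < c ∧
      ∀ m : IVec d, InC3 A B m → LowestOnOrbit A m →
        (∑' (k : ℤ) (l : ℕ),
            ENNReal.ofReal
              (inorm ((zpowM (dual A) k * zpowM (dual B) (l : ℤ)).mulVec m) ^ (-r)) ≤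
          ENNReal.ofReal (c * inorm m ^ (-(0.99 / (S : ℝ)) * r + 8)) ∨
        ∑' (k : ℤ) (l : ℕ),
            ENNReal.ofReal
              (inorm ((zpowM (dual A) k * zpowM (dual B) (-(l : ℤ) - 1)).mulVec m) ^ (-r)) ≤
          ENNReal.ofReal (c * inorm m ^ (-(0.99 / (S : ℝ)) * r + 8))) := by
  obtain ⟨a, ha, hA, ha'⟩ := exists_unit_dual hA2.1
  obtain ⟨b, hb, hB, hb'⟩ := exists_unit_dual hBS
  have hab : Commute a b := by
    have h : Commute a⁻¹ b⁻¹ := by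
      apply Units.ext
      rw [Units.val_mul, Units.val_mul, ha', hb', ← Matrix.transpose_mul,
        ← Matrix.transpose_mul, hcomm]
    simpa using h.inv_inv
  have hz : ∀ k l : ℤ,
      zpowM (dual A) k * zpowM (dual B) l = ((a ^ k * b ^ l : (Mat d)ˣ) : Mat d) := by
    intro k l
    rw [zpowM_eq, zpowM_eq, ← ha, ← hb, Units.val_mul, Matrix.coe_units_zpow,
      Matrix.coe_units_zpow]
  have hhat : hat A = (a : Mat d) - 1 := by rw [hat, ha]
  obtain ⟨C, hC1, hC⟩ := exists_good hab hA hB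
  set Z₁ := ∑' j : ℕ, (((j : ℝ) + 1) ^ 2)⁻¹
  set Z₂ := ∑' n : ℤ, ((1 + |(n : ℝ)|) ^ 2)⁻¹
  have hZ₁ : 0 < Z₁ := summable_nat_sq.tsum_pos (fun _ => by positivity) 0 (by positivity)
  have hZ₂ : 0 < Z₂ := summable_int_sq.tsum_pos (fun _ => by positivity) 0 (by positivity)
  refine ⟨C ^ ((r - 4) / S) * C ^ 2 * 9 * Z₁ * Z₂, by positivity, fun m hm hlow => ?_⟩
  obtain ⟨hm0, hnC1, hnR⟩ := hm
  -- A vector fixed by a nontrivial group element would be resonant or fixed by everything.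
  have hnr : ∀ k l : ℤ, ¬(k = 0 ∧ l = 0) →
      ((a ^ k * b ^ l : (Mat d)ˣ) : Mat d).mulVec m ≠ m := by
    intro k l hkl h
    refine hnR ⟨hm0, ⟨k, l, hkl, by rw [hz, h]⟩, ?_⟩
    by_contra! hfix
    exact hnC1 ⟨hm0, hfix⟩
  have hv : ((a : Mat d) - 1).mulVec m ≠ 0 := by
    intro h
    refine hnr 1 0 (by simp) ?_
    rw [orbit_eq hab hA, h]; simp
  have hS : S ≠ 0 := by
    rintro rfl
    rw [pow_zero] at hBS
    exact hm0 (by rw [← Matrix.one_mulVec m, hBS, Matrix.zero_mulVec])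
  have hr' : 8 * (S : ℝ) < 0.99 * r := by
    have hS0 : (0 : ℝ) < S := by exact_mod_cast Nat.pos_of_ne_zero hS
    rw [div_lt_iff₀ (by positivity)] at hr
    have : r * (0.99 / (S : ℝ)) = 0.99 * r / S := by ring
    rw [this, lt_div_iff₀ hS0] at hr
    exact hr
  have hμ := one_le_inorm hm0
  -- Both half-planes are treated alike, with `l = f j` and `j + 1 ≤ |l| + 1`.
  have fin : ∀ f : ℕ → ℤ, (∀ j : ℕ, (j : ℝ) ≤ |(f j : ℝ)|) →
      (∀ (j : ℕ) (k : ℤ), Good S C m (f j) (inorm (((a ^ k * b ^ f j : (Mat d)ˣ) : Mat d).mulVec m))) →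
      ∑' (k : ℤ) (j : ℕ), ENNReal.ofReal
        (inorm ((zpowM (dual A) k * zpowM (dual B) (f j)).mulVec m) ^ (-r)) ≤
      ENNReal.ofReal (C ^ ((r - 4) / S) * C ^ 2 * 9 * Z₁ * Z₂ *
        inorm m ^ (-(0.99 / (S : ℝ)) * r + 8)) := by
    intro f hf hg
    choose κ hκ using fun j => exists_center hab hA hm0 hv (f j)
    simp only [hz]
    refine (double_tsum_le (D := C ^ ((r - 4) / S) * C ^ 2 * 9 *
      inorm m ^ (-(0.99 / (S : ℝ)) * r + 8)) (by positivity) κ fun k j => ?_).trans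
      (le_of_eq (by congr 1; ring))
    have h3 := hκ j k
    have hp : 0 < inorm (((a ^ k * b ^ f j : (Mat d)ˣ) : Mat d).mulVec m) := by
      have := abs_nonneg ((k - κ j : ℤ) : ℝ)
      linarith
    exact term_bound hS hr' hC1 hμ hp (hg j k).1 (by positivity)
      ((add_le_add_left (hf j) 1).trans (hg j k).2) (by positivity) h3
  have hlow' : ∀ k : ℤ, inorm m ≤ inorm (m + k • ((a : Mat d) - 1).mulVec m) := by
    rw [← hhat]; exact hlow
  rcases hC m hm0 hnr hlow' with h | h
  · left
    refine fin (fun j => (j : ℤ)) (fun j => ?_) fun j k => h _ (by positivity) k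
    rw [Int.cast_natCast]; exact le_abs_self _
  · right
    refine fin (fun j => -(j : ℤ) - 1) (fun j => ?_) fun j k => h _ (by omega) k
    push_cast
    rw [abs_of_nonpos (by linarith [Nat.cast_nonneg (α := ℝ) j])]
    linarith

end ParabolicKAM
end
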